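/- arXiv:2507.21405 — 2 statements merged into one kernel-verified Lean document; each statement's English description precedes it below -/
import Mathlib

section
/- Let f̄ : (ℂⁿ,0) → (ℂⁿ,0) be a finite holomorphic map germ and let k = dim_ℂ O_n/⟨f̄⟩. Then there exists a minimal generating set g₁ = 1, g₂, …, g_k of the push-forward module f̄_* O_n consisting of monomials, ordered by nondecreasing polynomial degree, with the following property: for all i, j ≠ 1, whenever the product g_i g_j is expanded as g_i(x) g_j(x) = Σ_{s=1}^{k} Γ^{ij}_s(f̄(x)) g_s(x) with Γ^{ij}_s ∈ O_n, the coefficient germs satisfy Γ^{ij}_s(0) = 0 for every index s ≤ max{i, j}. -/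
/-!
Order the monomials by degree, breaking ties lexicographically, so that the order is compatible
with multiplication. In the local algebra `𝒪_n/⟨f⟩`, which is finite-dimensional over `ℂ` and hence
Artinian, all but finitely many monomials vanish and the monomials span. Keep the monomials that do
not depend linearly on later ones. These form a basis, and descending elimination expands every
monomial in kept monomials that are not earlier than it. If `g_i, g_j ≠ 1`, then `g_i g_j` is later
than both factors, so its expansion involves neither `g_i`, `g_j` nor anything before them. Finally
`Γ ∘ f ≡ Γ(0)` modulo `⟨f⟩`, because `Γ - Γ(0)` is in the ideal of the coordinate functions
(Hadamard's lemma), so the numbers `Γ_s(0)` are the coefficients of that expansion.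
-/

open Filter Topology Set

noncomputable section

/-- `ℂⁿ` with its Euclidean (Hermitian) norm. -/
abbrev Cn (n : ℕ) : Type := EuclideanSpace ℂ (Fin n)

instance germAlgebra {α : Type*} (l : Filter α) : Algebra ℂ (Filter.Germ l ℂ) :=
  Algebra.ofModule
    (fun r x y => by
      induction x using Filter.Germ.inductionOn with | _ f =>
      induction y using Filter.Germ.inductionOn with | _ g =>
      rw [← Filter.Germ.coe_smul, ← Filter.Germ.coe_mul, ← Filter.Germ.coe_mul,
        ← Filter.Germ.coe_smul, smul_mul_assoc])
    (fun r x y => by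
      induction x using Filter.Germ.inductionOn with | _ f =>
      induction y using Filter.Germ.inductionOn with | _ g =>
      rw [← Filter.Germ.coe_smul, ← Filter.Germ.coe_mul, ← Filter.Germ.coe_mul,
        ← Filter.Germ.coe_smul, mul_smul_comm])

/-- The local ℂ-algebra `𝒪_n` of germs at `0` of holomorphic functions on `ℂⁿ`. -/
def Ogerm (n : ℕ) : Subalgebra ℂ (Filter.Germ (𝓝 (0 : Cn n)) ℂ) where
  carrier := {G | ∃ g : Cn n → ℂ, AnalyticAt ℂ g 0 ∧ (g : Filter.Germ (𝓝 (0 : Cn n)) ℂ) = G}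
  mul_mem' := by rintro _ _ ⟨g, hg, rfl⟩ ⟨h, hh, rfl⟩; exact ⟨g * h, hg.mul hh, rfl⟩
  add_mem' := by rintro _ _ ⟨g, hg, rfl⟩ ⟨h, hh, rfl⟩; exact ⟨g + h, hg.add hh, rfl⟩
  algebraMap_mem' := fun c => ⟨fun _ => c, analyticAt_const, by
    rw [Algebra.algebraMap_eq_smul_one, ← Filter.Germ.coe_one, ← Filter.Germ.coe_smul]
    congr 1
    funext x
    simp⟩

/-- The ideal `⟨f⟩` of `𝒪_n` generated by the coordinate functions of `f`. -/
def coordIdeal {n p : ℕ} (f : Cn n → Cn p) : Ideal (Ogerm n) :=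
  Ideal.span {G : Ogerm n | ∃ i : Fin p,
    (G : Filter.Germ (𝓝 (0 : Cn n)) ℂ) =
      ((fun x => f x i : Cn n → ℂ) : Filter.Germ (𝓝 (0 : Cn n)) ℂ)}

/-- The multiplicity `mult f = dim_ℂ 𝒪ₙ/⟨f⟩` of a map germ. -/
def multGerm {n p : ℕ} (f : Cn n → Cn p) : Cardinal :=
  Module.rank ℂ (Ogerm n ⧸ coordIdeal f)

/-- `f` is a finite map germ: `dim_ℂ 𝒪ₙ/f^*(𝔪_p)𝒪ₙ < ∞`. -/
def FiniteGerm {n p : ℕ} (f : Cn n → Cn p) : Prop :=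
  multGerm f < Cardinal.aleph0

section Pivots

variable {K V M : Type*}

section Semiring

variable [Semiring K] [AddCommMonoid V] [Module K V] [Preorder M]

variable (K) in
/-- The pivots of a family `v` indexed by an ordered type, eliminating from the top: the indices
`b` such that `v b` does not depend linearly on the later vectors. For the monomials of a quotient
of a polynomial or power series ring these are the standard monomials of a local order. -/
def pivots (v : M → V) : Set M :=
  {b | v b ∉ Submodule.span K (v '' Ioi b)}

theorem pivots_subset_support (v : M → V) : pivots K v ⊆ Function.support v :=
  fun _ hb hvb => hb (hvb ▸ zero_mem _)

theorem mem_span_image_pivots_inter_Ici {v : M → V}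
    (hv : (Function.support v).WellFoundedOn (· > ·)) (a : M) :
    v a ∈ Submodule.span K (v '' (pivots K v ∩ Ici a)) := by
  by_cases ha : a ∈ Function.support v
  · refine hv.induction (P := fun a => v a ∈ Submodule.span K (v '' (pivots K v ∩ Ici a))) ha
      fun a _ ih => ?_
    by_cases hpivot : a ∈ pivots K v
    · exact Submodule.subset_span ⟨a, ⟨hpivot, le_rfl⟩, rfl⟩
    · refine Submodule.span_le.2 ?_ (not_not.1 hpivot)
      rintro _ ⟨b, hab : a < b, rfl⟩
      by_cases hb : b ∈ Function.support v
      · exact Submodule.span_mono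
          (image_mono (inter_subset_inter_right _ (Ici_subset_Ici.2 hab.le))) (ih b hb hab)
      · rw [Function.notMem_support.1 hb]
        exact zero_mem _
  · rw [Function.notMem_support.1 ha]
    exact zero_mem _

theorem span_image_pivots {v : M → V} (hv : (Function.support v).WellFoundedOn (· > ·)) :
    Submodule.span K (v '' pivots K v) = Submodule.span K (range v) := by
  refine le_antisymm (Submodule.span_mono (image_subset_range _ _)) (Submodule.span_le.2 ?_)
  rintro _ ⟨a, rfl⟩
  exact Submodule.span_mono (image_mono inter_subset_left) (mem_span_image_pivots_inter_Ici hv a)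

end Semiring

section DivisionRing

variable [DivisionRing K] [AddCommGroup V] [Module K V] [LinearOrder M]

theorem linearIndepOn_pivots (v : M → V) : LinearIndepOn K v (pivots K v) := by
  rw [linearIndepOn_iff_linearIndepOn_finset]
  intro t
  induction t using Finset.induction_on_min with
  | empty => simp
  | insert a s has ih =>
    intro hs
    rw [Finset.coe_insert, insert_subset_iff] at hs
    rw [Finset.coe_insert]
    exact (ih hs.2).insert fun ha => hs.1 (Submodule.span_mono (image_mono has) ha)

variable {v : M → V} (hv : (Function.support v).WellFoundedOn (· > ·))
  (hspan : Submodule.span K (range v) = ⊤)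

/-- The basis of `V` formed by the vectors `v b` of a spanning family with `b` a pivot. -/
def pivotBasis : Module.Basis (pivots K v) K V :=
  Module.Basis.mk (linearIndepOn_pivots v) <| by
    rw [← image_eq_range, span_image_pivots hv, hspan]

theorem pivotBasis_apply (b : pivots K v) : pivotBasis hv hspan b = v b :=
  Module.Basis.mk_apply _ _ b

theorem le_of_pivotBasis_repr_ne_zero {a : M} {b : pivots K v}
    (h : (pivotBasis hv hspan).repr (v a) b ≠ 0) : a ≤ b := by
  have himage : v '' (pivots K v ∩ Ici a) = pivotBasis hv hspan '' {b | a ≤ b} := by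
    ext w
    simp [pivotBasis_apply, and_assoc, and_left_comm]
  have hmem := mem_span_image_pivots_inter_Ici (K := K) hv a
  rw [himage, Module.Basis.mem_span_image] at hmem
  exact hmem (Finsupp.mem_support_iff.2 h)

end DivisionRing

end Pivots

theorem orderEmbedding_fin_eq_iff_of_isBot {M : Type*} [PartialOrder M] {k : ℕ} (a : Fin k ↪o M)
    {m : M} (hm : IsBot m) (hma : m ∈ range a) (i : Fin k) : a i = m ↔ (i : ℕ) = 0 := by
  obtain ⟨j, rfl⟩ := hma
  have hj (l : Fin k) : j ≤ l := a.le_iff_le.1 (hm (a l))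
  rw [a.eq_iff_eq]
  refine ⟨?_, fun hi => le_antisymm (Fin.le_def.2 (hi ▸ Nat.zero_le _)) (hj i)⟩
  rintro rfl
  exact Nat.le_zero.1 (hj ⟨0, i.pos⟩)

theorem exists_fin_basis_of_zero_mem_pivots {K Q M : Type*} [Field K] [Ring Q]
    [Algebra K Q] [AddCommMonoid M] [LinearOrder M] [IsOrderedCancelAddMonoid M]
    (hbot : IsBot (0 : M)) {v : M → Q} (hadd : ∀ a b, v (a + b) = v a * v b)
    (hfin : (Function.support v).Finite) (hspan : Submodule.span K (range v) = ⊤)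
    (hzero : 0 ∈ pivots K v) {k : ℕ} (hk : Module.rank K Q = k) :
    ∃ (a : Fin k ↪o M) (b : Module.Basis (Fin k) K Q),
      (∀ i, b i = v (a i)) ∧ (∀ i : Fin k, (i : ℕ) = 0 → a i = 0) ∧
      ∀ i j : Fin k, (i : ℕ) ≠ 0 → (j : ℕ) ≠ 0 → ∀ s ≤ max i j, b.repr (b i * b j) s = 0 := by
  have hwf : (Function.support v).WellFoundedOn (· > ·) := hfin.wellFoundedOn
  have : Fintype (pivots K v) := (hfin.subset (pivots_subset_support v)).fintype
  have hcard : Fintype.card (pivots K v) = k := by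
    exact_mod_cast (rank_eq_card_basis (pivotBasis hwf hspan)).symm.trans hk
  let e : Fin k ≃o pivots K v := Fintype.orderIsoFinOfCardEq _ hcard
  let a : Fin k ↪o M := e.toOrderEmbedding.trans (OrderEmbedding.subtype _)
  let b := (pivotBasis hwf hspan).reindex e.symm.toEquiv
  have hb (i : Fin k) : b i = v (a i) := by simp [b, a, pivotBasis_apply]
  have hzero_iff := orderEmbedding_fin_eq_iff_of_isBot a hbot ⟨e.symm ⟨0, hzero⟩, by simp [a]⟩
  have hpos {i : Fin k} (hi : (i : ℕ) ≠ 0) : 0 < a i := (hbot _).lt_of_ne' (mt (hzero_iff i).1 hi)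
  refine ⟨a, b, hb, fun i => (hzero_iff i).2, fun i j hi hj s hs => ?_⟩
  by_contra hne
  have hle : a i + a j ≤ a s := by
    rw [hb, hb, ← hadd, Module.Basis.repr_reindex_apply] at hne
    exact le_of_pivotBasis_repr_ne_zero hwf hspan hne
  have hmax : max (a i) (a j) < a i + a j :=
    max_lt (lt_add_of_pos_right _ (hpos hj)) (lt_add_of_pos_left _ (hpos hi))
  exact (hle.trans ((a.monotone hs).trans_eq a.monotone.map_max)).not_gt hmax

section Monomials

variable {σ Q : Type*}

/-- The value at `x` of the monomial with exponent vector `a`. Exponent vectors are taken in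
`DegLex` because the monomials are to be compared by degree first. -/
def monomialEval [CommMonoid Q] (x : σ → Q) (a : DegLex (σ →₀ ℕ)) : Q :=
  (ofDegLex a).prod fun t m => x t ^ m

theorem monomialEval_zero [CommMonoid Q] (x : σ → Q) : monomialEval x 0 = 1 :=
  Finsupp.prod_zero_index

theorem monomialEval_add [CommMonoid Q] (x : σ → Q) (a b : DegLex (σ →₀ ℕ)) :
    monomialEval x (a + b) = monomialEval x a * monomialEval x b :=
  Finsupp.prod_add_index' (fun _ => pow_zero _) fun _ => pow_add _

theorem monomialEval_eq_prod [Fintype σ] [CommMonoid Q] (x : σ → Q) (a : DegLex (σ →₀ ℕ)) :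
    monomialEval x a = ∏ t, x t ^ ofDegLex a t :=
  Finsupp.prod_fintype _ _ fun _ => pow_zero _

theorem map_monomialEval {R : Type*} [CommMonoid Q] [CommMonoid R] (φ : Q →* R) (x : σ → Q)
    (a : DegLex (σ →₀ ℕ)) : φ (monomialEval x a) = monomialEval (φ ∘ x) a := by
  simp [monomialEval, map_finsuppProd]

theorem monomialEval_eq_zero [CommMonoidWithZero Q] {x : σ → Q} {a : DegLex (σ →₀ ℕ)} {t : σ}
    (h : x t ^ ofDegLex a t = 0) (ht : ofDegLex a t ≠ 0) : monomialEval x a = 0 :=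
  Finset.prod_eq_zero (Finsupp.mem_support_iff.2 ht) h

theorem finite_support_monomialEval [Finite σ] [CommMonoidWithZero Q] {x : σ → Q}
    (hx : ∀ t, IsNilpotent (x t)) : (Function.support (monomialEval x)).Finite := by
  choose N hN using hx
  classical
  refine ((finite_Iic (Finsupp.equivFunOnFinite.symm N)).preimage
    ofDegLex_injective.injOn).subset fun a ha t => ?_
  by_contra! hlt
  exact ha (monomialEval_eq_zero (pow_eq_zero_of_le hlt.le (hN t)) (Nat.ne_zero_of_lt hlt))

theorem span_range_monomialEval {K : Type*} [CommSemiring K] [CommSemiring Q] [Algebra K Q]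
    (x : σ → Q) :
    Submodule.span K (range (monomialEval x)) = (Algebra.adjoin K (range x)).toSubmodule := by
  rw [Algebra.adjoin_eq_span]
  congr 1
  ext q
  rw [SetLike.mem_coe, Submonoid.mem_closure_range_iff]
  exact ⟨fun ⟨a, ha⟩ => ⟨a, ha.symm⟩, fun ⟨a, ha⟩ => ⟨a, ha.symm⟩⟩

theorem zero_mem_pivots_monomialEval {K : Type*} [LinearOrder σ] [Field K] [CommRing Q]
    [Algebra K Q] (ε : Q →ₐ[K] K) {x : σ → Q} (hx : ∀ t, ε (x t) = 0) :
    0 ∈ pivots K (monomialEval x) := by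
  have hker : Submodule.span K (monomialEval x '' Ioi 0) ≤ ε.toLinearMap.ker := by
    rw [Submodule.span_le]
    rintro _ ⟨a, ha : 0 < a, rfl⟩
    obtain ⟨t, ht⟩ : ∃ t, ofDegLex a t ≠ 0 := DFunLike.ne_iff.1 (ofDegLex_injective.ne ha.ne')
    refine (map_monomialEval (ε : Q →* K) x a).trans (monomialEval_eq_zero (t := t) ?_ ht)
    simp [hx, ht]
  intro h
  simpa [monomialEval_zero] using hker h

end Monomials

theorem isNilpotent_of_ne_top {R : Type*} [CommRing R] [IsLocalRing R] [IsArtinianRing R]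
    {I : Ideal R} (hI : I ≠ ⊤) : IsNilpotent I := by
  obtain ⟨N, hN⟩ := IsArtinianRing.isNilpotent_jacobson_bot (R := R)
  rw [IsLocalRing.jacobson_eq_maximalIdeal _ bot_ne_top] at hN
  exact ⟨N, le_bot_iff.1 ((Ideal.pow_right_mono (IsLocalRing.le_maximalIdeal hI) N).trans_eq hN)⟩

theorem exists_mem_adjoin_sub_mem_span_pow {R A : Type*} [CommRing R] [CommRing A] [Algebra R A]
    {s : Set A} (h : ∀ q : A, ∃ c : R, q - algebraMap R A c ∈ Ideal.span s) (m : ℕ) (q : A) :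
    ∃ p ∈ Algebra.adjoin R s, q - p ∈ Ideal.span s ^ m := by
  induction m generalizing q with
  | zero => exact ⟨0, zero_mem _, by simp⟩
  | succ m ih =>
    suffices hspan : ∀ r ∈ Ideal.span s,
        ∃ p ∈ Algebra.adjoin R s, r - p ∈ Ideal.span s ^ (m + 1) by
      obtain ⟨c, hc⟩ := h q
      obtain ⟨p, hp, hqp⟩ := hspan _ hc
      exact ⟨algebraMap R A c + p, add_mem (Subalgebra.algebraMap_mem _ c) hp,
        by rwa [← sub_sub]⟩
    intro r hr
    induction hr using Submodule.closure_induction with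
    | zero => exact ⟨0, zero_mem _, by simp⟩
    | add y z _ _ hy hz =>
      obtain ⟨p, hp, hyp⟩ := hy
      obtain ⟨p', hp', hzp'⟩ := hz
      exact ⟨p + p', add_mem hp hp', by rw [add_sub_add_comm]; exact add_mem hyp hzp'⟩
    | smul_mem a y hy =>
      obtain ⟨p, hp, hap⟩ := ih a
      refine ⟨p * y, mul_mem hp (Algebra.subset_adjoin hy), ?_⟩
      rw [smul_eq_mul, ← sub_mul, pow_succ]
      exact Ideal.mul_mem_mul hap (Ideal.subset_span hy)

theorem adjoin_eq_top_of_isNilpotent_span {R A : Type*} [CommRing R] [CommRing A] [Algebra R A]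
    {s : Set A} (hnil : IsNilpotent (Ideal.span s))
    (h : ∀ q : A, ∃ c : R, q - algebraMap R A c ∈ Ideal.span s) : Algebra.adjoin R s = ⊤ := by
  obtain ⟨N, hN⟩ := hnil
  refine eq_top_iff.2 fun q _ => ?_
  obtain ⟨p, hp, hqp⟩ := exists_mem_adjoin_sub_mem_span_pow h N q
  rw [hN, Ideal.zero_eq_bot, Ideal.mem_bot, sub_eq_zero] at hqp
  exact hqp ▸ hp

theorem exists_ordered_monomial_basis {K Q σ : Type*} [Field K] [CommRing Q] [Algebra K Q]
    [IsLocalRing Q] [Finite σ] [LinearOrder σ] {ε : Q →ₐ[K] K} {x : σ → Q}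
    (hx : Ideal.span (range x) = RingHom.ker ε) {k : ℕ} (hk : Module.rank K Q = k) :
    ∃ (a : Fin k ↪o DegLex (σ →₀ ℕ)) (b : Module.Basis (Fin k) K Q),
      (∀ i, b i = monomialEval x (a i)) ∧ (∀ i : Fin k, (i : ℕ) = 0 → a i = 0) ∧
      ∀ i j : Fin k, (i : ℕ) ≠ 0 → (j : ℕ) ≠ 0 → ∀ s ≤ max i j, b.repr (b i * b j) s = 0 := by
  have : Module.Finite K Q := Module.finite_of_rank_eq_nat hk
  have : IsArtinianRing Q := IsArtinianRing.of_finite K Q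
  have hnil : IsNilpotent (Ideal.span (range x)) :=
    isNilpotent_of_ne_top (hx ▸ RingHom.ker_ne_top ε)
  have hx_mem (t : σ) : x t ∈ Ideal.span (range x) := Ideal.subset_span (mem_range_self t)
  have hx_nil (t : σ) : IsNilpotent (x t) := by
    obtain ⟨N, hN⟩ := hnil
    exact ⟨N, by simpa [hN] using Ideal.pow_mem_pow (hx_mem t) N⟩
  have hadjoin : Algebra.adjoin K (range x) = ⊤ :=
    adjoin_eq_top_of_isNilpotent_span hnil fun q => ⟨ε q, by simp [hx, RingHom.mem_ker]⟩
  refine exists_fin_basis_of_zero_mem_pivots (fun a => bot_le (a := a)) (monomialEval_add x)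
    (finite_support_monomialEval hx_nil) ?_ (zero_mem_pivots_monomialEval ε fun t => ?_) hk
  · rw [span_range_monomialEval, hadjoin, Algebra.top_toSubmodule]
  · exact RingHom.mem_ker.1 (hx ▸ hx_mem t)

theorem exists_ordered_monomials_quotient {K A σ : Type*} [Field K] [CommRing A] [Algebra K A]
    [IsLocalRing A] [Finite σ] [LinearOrder σ] {ε : A →ₐ[K] K} {I : Ideal A}
    (hI : I ≤ RingHom.ker ε) {x : σ → A} (hx : Ideal.span (range x) = RingHom.ker ε) {k : ℕ}
    (hk : Module.rank K (A ⧸ I) = k) :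
    ∃ a : Fin k ↪o DegLex (σ →₀ ℕ),
      (∀ i : Fin k, (i : ℕ) = 0 → a i = 0) ∧
      LinearIndependent K (fun i => Ideal.Quotient.mk I (monomialEval x (a i))) ∧
      Submodule.span K (range fun i => Ideal.Quotient.mk I (monomialEval x (a i))) = ⊤ ∧
      ∀ i j : Fin k, (i : ℕ) ≠ 0 → (j : ℕ) ≠ 0 → ∀ c : Fin k → K,
        Ideal.Quotient.mk I (monomialEval x (a i) * monomialEval x (a j)) =
          ∑ s, c s • Ideal.Quotient.mk I (monomialEval x (a s)) →
        ∀ s ≤ max i j, c s = 0 := by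
  have : Nontrivial (A ⧸ I) := Ideal.Quotient.nontrivial_iff.2
    (ne_top_of_le_ne_top (RingHom.ker_ne_top ε) hI)
  have : IsLocalRing (A ⧸ I) :=
    .of_surjective' (Ideal.Quotient.mk I) Ideal.Quotient.mk_surjective
  have hx_mk : Ideal.span (range (Ideal.Quotient.mk I ∘ x)) =
      RingHom.ker (Ideal.Quotient.liftₐ I ε hI) := by
    rw [range_comp, ← Ideal.map_span, hx]
    exact (Ideal.ker_quotient_lift (ε : A →+* K) hI).symm
  obtain ⟨a, b, hb, ha0, hmul⟩ := exists_ordered_monomial_basis hx_mk hk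
  have hb_mk (i : Fin k) : Ideal.Quotient.mk I (monomialEval x (a i)) = b i :=
    (map_monomialEval (Ideal.Quotient.mk I : A →* A ⧸ I) x (a i)).trans (hb i).symm
  refine ⟨a, ha0, ?_⟩
  simp only [map_mul, hb_mk]
  refine ⟨b.linearIndependent, b.span_eq, fun i j hi hj c hc s hs => ?_⟩
  rw [← hmul i j hi hj s hs, hc, b.repr_sum_self]

theorem formalMultilinearSeries_unshift_coeff_zero {𝕜 E F : Type*} [NontriviallyNormedField 𝕜]
    [NormedAddCommGroup E] [NormedSpace 𝕜 E] [NormedAddCommGroup F] [NormedSpace 𝕜 F]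
    (p : FormalMultilinearSeries 𝕜 E F) : p.shift.unshift (p 0 0) = p := by
  ext1 m
  cases m with
  | zero => exact ContinuousMultilinearMap.uncurry0_curry0 (p 0)
  | succ m => exact (continuousMultilinearCurryRightEquiv' 𝕜 m E F).symm_apply_apply _

theorem exists_analyticAt_eventually_eq_add_apply_sub {𝕜 E F : Type*} [NontriviallyNormedField 𝕜]
    [NormedAddCommGroup E] [NormedSpace 𝕜 E] [NormedAddCommGroup F] [NormedSpace 𝕜 F]
    [CompleteSpace F] {f : E → F} {x : E} (hf : AnalyticAt 𝕜 f x) :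
    ∃ h : E → E →L[𝕜] F, AnalyticAt 𝕜 h x ∧ ∀ᶠ y in 𝓝 x, f y = f x + h y (y - x) := by
  obtain ⟨p, hp⟩ := hf
  have hshift : 0 < p.shift.radius := p.radius_shift ▸ hp.radius_pos
  have hh : HasFPowerSeriesOnBall (fun y => p.shift.sum (y - x)) p.shift x p.shift.radius := by
    simpa using (p.shift.hasFPowerSeriesOnBall hshift).comp_sub x
  refine ⟨_, hh.analyticAt, ?_⟩
  have hsum := hh.unshift (z := f x)
  rw [← hp.coeff_zero 0, formalMultilinearSeries_unshift_coeff_zero, hp.coeff_zero] at hsum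
  filter_upwards [hp.eventually_hasSum_sub, hsum.hasFPowerSeriesAt.eventually_hasSum_sub]
    with y hy hy' using hy.unique hy'

theorem euclideanSpace_map_eq_sum {𝕜 ι E : Type*} [RCLike 𝕜] [Fintype ι] [DecidableEq ι]
    [AddCommMonoid E] [Module 𝕜 E] [TopologicalSpace E] (L : EuclideanSpace 𝕜 ι →L[𝕜] E)
    (x : EuclideanSpace 𝕜 ι) : L x = ∑ t, x t • L (EuclideanSpace.single t 1) := by
  have hx : x = ∑ t, x t • EuclideanSpace.single t (1 : 𝕜) := by
    ext s
    simp [Pi.single_apply]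
  simpa using congrArg L hx

namespace Ogerm

/-- The germ at `0` of an analytic function. -/
def mk {n : ℕ} (g : Cn n → ℂ) (hg : AnalyticAt ℂ g 0) : Ogerm n :=
  ⟨(g : Germ (𝓝 (0 : Cn n)) ℂ), g, hg, rfl⟩

theorem exists_eq_mk {n : ℕ} (G : Ogerm n) : ∃ g hg, G = mk (n := n) g hg := by
  obtain ⟨_, g, hg, rfl⟩ := G
  exact ⟨g, hg, rfl⟩

theorem mk_eq_mk_iff {n : ℕ} {g h : Cn n → ℂ} (hg : AnalyticAt ℂ g 0) (hh : AnalyticAt ℂ h 0) :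
    mk g hg = mk h hh ↔ g =ᶠ[𝓝 0] h :=
  Subtype.ext_iff.trans Germ.coe_eq

theorem coe_algebraMap {n : ℕ} (c : ℂ) :
    (algebraMap ℂ (Ogerm n) c : Germ (𝓝 (0 : Cn n)) ℂ) = ((fun _ => c : Cn n → ℂ) : Germ _ ℂ) := by
  change algebraMap ℂ (Germ (𝓝 (0 : Cn n)) ℂ) c = _
  rw [Algebra.algebraMap_eq_smul_one, ← Germ.coe_one, ← Germ.coe_smul]
  congr 1
  funext x
  simp

/-- Evaluation at the origin; its kernel is the maximal ideal of `𝒪_n`. -/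
def eval (n : ℕ) : Ogerm n →ₐ[ℂ] ℂ where
  toRingHom := Germ.valueRingHom.comp (Ogerm n).val.toRingHom
  commutes' c := congrArg Germ.value (coe_algebraMap (n := n) c)

theorem eval_mk {n : ℕ} (g : Cn n → ℂ) (hg : AnalyticAt ℂ g 0) : eval n (mk g hg) = g 0 := rfl

instance isLocalHom_eval (n : ℕ) : IsLocalHom (eval n : Ogerm n →+* ℂ) where
  map_nonunit G hG := by
    obtain ⟨g, hg, rfl⟩ := exists_eq_mk G
    have hg0 : g 0 ≠ 0 := hG.ne_zero
    have hinv := hg.inv hg0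
    refine .of_mul_eq_one (mk _ hinv) ((mk_eq_mk_iff (hg.mul hinv) analyticAt_const).2 ?_)
    filter_upwards [hg.continuousAt.eventually_ne hg0] with x hx using mul_inv_cancel₀ hx

instance isLocalRing (n : ℕ) : IsLocalRing (Ogerm n) :=
  (eval n : Ogerm n →+* ℂ).domain_isLocalRing

/-- The germ of the coordinate function `x_t`. -/
def coord {n : ℕ} (t : Fin n) : Ogerm n :=
  mk (fun x => x t) ((EuclideanSpace.proj t : Cn n →L[ℂ] ℂ).analyticAt 0)

theorem span_range_coord (n : ℕ) :
    Ideal.span (range (coord : Fin n → Ogerm n)) = RingHom.ker (eval n) := by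
  refine le_antisymm (Ideal.span_le.2 ?_) fun G hG => ?_
  · rintro _ ⟨t, rfl⟩
    exact eval_mk _ _
  · obtain ⟨g, hg, rfl⟩ := exists_eq_mk G
    obtain ⟨h, hh, hgh⟩ := exists_analyticAt_eventually_eq_add_apply_sub hg
    have hh_apply (v : Cn n) : AnalyticAt ℂ (fun x => h x v) 0 :=
      ((ContinuousLinearMap.apply ℂ ℂ v).analyticAt _).comp hh
    have hsum : mk g hg = ∑ t, coord t * mk _ (hh_apply (EuclideanSpace.single t 1)) := by
      apply Subtype.ext
      rw [AddSubmonoidClass.coe_finsetSum]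
      refine (Germ.coe_eq.2 ?_).trans (Germ.coe_sum _ _ _ _)
      filter_upwards [hgh] with x hx
      rw [hx, show g 0 = 0 from hG, zero_add, sub_zero, Finset.sum_apply]
      exact euclideanSpace_map_eq_sum (h x) x
    rw [hsum]
    exact sum_mem fun t _ => Ideal.mul_mem_right _ _ (Ideal.subset_span (mem_range_self t))

theorem coe_monomialEval_coord {n : ℕ} (a : DegLex (Fin n →₀ ℕ)) :
    (monomialEval coord a : Ogerm n) =
      ((fun x => ∏ t, x t ^ ofDegLex a t : Cn n → ℂ) : Germ (𝓝 (0 : Cn n)) ℂ) := by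
  rw [monomialEval_eq_prod, SubmonoidClass.coe_finsetProd, ← Finset.prod_fn]
  exact (Germ.coe_prod _ _ _ _).symm

section Pullback

variable {n p : ℕ} {f : Cn n → Cn p} (hf0 : f 0 = 0) (hfa : AnalyticAt ℂ f 0)

/-- The pullback `f^* : 𝒪_p → 𝒪_n` along a holomorphic map germ `f : (ℂⁿ,0) → (ℂᵖ,0)`. -/
def pullback : Ogerm p →ₐ[ℂ] Ogerm n where
  toFun G := ⟨(G : Germ (𝓝 (0 : Cn p)) ℂ).compTendsto f (hf0 ▸ hfa.continuousAt.tendsto), by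
    obtain ⟨_, g, hg, rfl⟩ := G
    exact ⟨g ∘ f, AnalyticAt.comp (hf0 ▸ hg) hfa, rfl⟩⟩
  map_one' := rfl
  map_zero' := rfl
  map_mul' := by
    rintro ⟨_, g, hg, rfl⟩ ⟨_, h, hh, rfl⟩
    rfl
  map_add' := by
    rintro ⟨_, g, hg, rfl⟩ ⟨_, h, hh, rfl⟩
    rfl
  commutes' c := by
    apply Subtype.ext
    simp only [coe_algebraMap]
    rfl

theorem coordIdeal_eq_map_pullback :
    coordIdeal f = (RingHom.ker (eval p)).map (pullback hf0 hfa) := by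
  rw [← span_range_coord, Ideal.map_span, coordIdeal, ← range_comp]
  congr 1
  ext G
  exact exists_congr fun i => ⟨fun h => Subtype.ext h.symm, fun h => congrArg Subtype.val h.symm⟩

theorem quotientMk_pullback (G : Ogerm p) :
    Ideal.Quotient.mk (coordIdeal f) (pullback hf0 hfa G) =
      algebraMap ℂ (Ogerm n ⧸ coordIdeal f) (eval p G) := by
  have hker : G - algebraMap ℂ _ (eval p G) ∈ RingHom.ker (eval p) := by
    rw [RingHom.mem_ker, map_sub, AlgHom.commutes]
    exact sub_self _
  have hmem := Ideal.mem_map_of_mem (pullback hf0 hfa) hker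
  rw [← coordIdeal_eq_map_pullback, map_sub, AlgHom.commutes] at hmem
  exact Ideal.Quotient.eq.2 hmem

end Pullback

theorem coordIdeal_le_ker_eval {n p : ℕ} {f : Cn n → Cn p} (hf0 : f 0 = 0) :
    coordIdeal f ≤ RingHom.ker (eval n) := by
  refine Ideal.span_le.2 ?_
  rintro G ⟨i, hi⟩
  calc eval n G = Germ.value ((fun x => f x i : Cn n → ℂ) : Germ (𝓝 (0 : Cn n)) ℂ) :=
        congrArg Germ.value hi
    _ = 0 := congrArg (fun y : Cn p => y i) hf0

theorem quotientMk_eq_sum_smul {n p k : ℕ} {f : Cn n → Cn p} (hf0 : f 0 = 0)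
    (hfa : AnalyticAt ℂ f 0) {g : Fin k → Ogerm n} {G : Ogerm n} {Γ : Fin k → Cn p → ℂ}
    (hΓ : ∀ s, AnalyticAt ℂ (Γ s) 0)
    (hG : (G : Germ (𝓝 (0 : Cn n)) ℂ) =
      ∑ s, ((fun x => Γ s (f x) : Cn n → ℂ) : Germ (𝓝 (0 : Cn n)) ℂ) * (g s : Germ _ ℂ)) :
    Ideal.Quotient.mk (coordIdeal f) G =
      ∑ s, Γ s 0 • Ideal.Quotient.mk (coordIdeal f) (g s) := by
  have hpullback : G = ∑ s, pullback hf0 hfa (mk (Γ s) (hΓ s)) * g s := by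
    apply Subtype.ext
    rw [hG, AddSubmonoidClass.coe_finsetSum]
    rfl
  simp only [hpullback, map_sum, map_mul, quotientMk_pullback, eval_mk]
  exact Finset.sum_congr rfl fun s _ => (Algebra.smul_def _ _).symm

end Ogerm

theorem exists_ordered_monomial_generators_general (n p k : ℕ) (f : Cn n → Cn p)
    (hf0 : f 0 = 0) (hfa : AnalyticAt ℂ f 0) (hk : multGerm f = k) :
    ∃ (g : Fin k → Ogerm n) (α : Fin k → Fin n → ℕ),
      (∀ i : Fin k, (i : ℕ) = 0 → g i = 1) ∧
      (∀ i : Fin k, (g i : Germ (𝓝 (0 : Cn n)) ℂ) =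
        ((fun x => ∏ t : Fin n, (x t) ^ (α i t) : Cn n → ℂ) : Germ (𝓝 (0 : Cn n)) ℂ)) ∧
      (∀ i j : Fin k, i ≤ j → (∑ t : Fin n, α i t) ≤ ∑ t : Fin n, α j t) ∧
      LinearIndependent ℂ (fun i : Fin k => Ideal.Quotient.mk (coordIdeal f) (g i)) ∧
      Submodule.span ℂ
        (range fun i : Fin k => Ideal.Quotient.mk (coordIdeal f) (g i)) = ⊤ ∧
      (∀ i j : Fin k, (i : ℕ) ≠ 0 → (j : ℕ) ≠ 0 →
        ∀ Γ : Fin k → (Cn p → ℂ), (∀ s, AnalyticAt ℂ (Γ s) 0) →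
          ((g i : Germ (𝓝 (0 : Cn n)) ℂ) * (g j : Germ (𝓝 (0 : Cn n)) ℂ) =
            ∑ s : Fin k, ((fun x => Γ s (f x) : Cn n → ℂ) : Germ (𝓝 (0 : Cn n)) ℂ) *
              (g s : Germ (𝓝 (0 : Cn n)) ℂ)) →
          ∀ s : Fin k, s ≤ max i j → Γ s 0 = 0) := by
  obtain ⟨a, ha0, hli, hspan, hmul⟩ := exists_ordered_monomials_quotient
    (Ogerm.coordIdeal_le_ker_eval hf0) (Ogerm.span_range_coord n) hk
  refine ⟨fun i => monomialEval Ogerm.coord (a i), fun i t => ofDegLex (a i) t, fun i hi => ?_,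
    fun i => Ogerm.coe_monomialEval_coord (a i), fun i j hij => ?_, hli, hspan, ?_⟩
  · simp only [ha0 i hi, monomialEval_zero]
  · simpa [Finsupp.degree_eq_sum] using Finsupp.DegLex.monotone_degree (a.monotone hij)
  · intro i j hi hj Γ hΓ hprod
    exact hmul i j hi hj _ (Ogerm.quotientMk_eq_sum_smul hf0 hfa hΓ hprod)

set_option synthInstance.maxHeartbeats 1000000 in
/-- **Lemma (statement 3).** For a finite map germ `f̄ : (ℂⁿ,0) → (ℂⁿ,0)` with
`k = dim_ℂ 𝒪ₙ/⟨f̄⟩` there is a minimal generating set `g₁ = 1, g₂, …, g_k` of the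
pushforward module `f̄_* 𝒪ₙ` (that is, a family of monomials whose classes form a
ℂ-basis of `𝒪ₙ/⟨f̄⟩`), ordered by nondecreasing degree, such that whenever
`gᵢ gⱼ = Σ_s Γˢᵢⱼ(f̄(x)) g_s` with `i, j ≠ 1`, the coefficients `Γˢᵢⱼ` with
`s ≤ max i j` vanish at the origin. -/
theorem exists_ordered_monomial_generators (n k : ℕ) (fb : Cn n → Cn n)
    (hf0 : fb 0 = 0) (hfa : AnalyticAt ℂ fb 0) (hfin : FiniteGerm fb)
    (hk : multGerm fb = k) :
    ∃ (g : Fin k → Ogerm n) (α : Fin k → Fin n → ℕ),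
      (∀ i : Fin k, (i : ℕ) = 0 → g i = 1) ∧
      (∀ i : Fin k, (g i : Filter.Germ (𝓝 (0 : Cn n)) ℂ) =
        ((fun x => ∏ t : Fin n, (x t) ^ (α i t) : Cn n → ℂ) :
          Filter.Germ (𝓝 (0 : Cn n)) ℂ)) ∧
      (∀ i j : Fin k, i ≤ j → (∑ t : Fin n, α i t) ≤ ∑ t : Fin n, α j t) ∧
      LinearIndependent ℂ (fun i : Fin k => Ideal.Quotient.mk (coordIdeal fb) (g i)) ∧
      Submodule.span ℂ
        (Set.range fun i : Fin k => Ideal.Quotient.mk (coordIdeal fb) (g i)) = ⊤ ∧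
      (∀ i j : Fin k, (i : ℕ) ≠ 0 → (j : ℕ) ≠ 0 →
        ∀ Γ : Fin k → (Cn n → ℂ), (∀ s, AnalyticAt ℂ (Γ s) 0) →
          ((g i : Filter.Germ (𝓝 (0 : Cn n)) ℂ) * (g j : Filter.Germ (𝓝 (0 : Cn n)) ℂ) =
            ∑ s : Fin k, ((fun x => Γ s (fb x) : Cn n → ℂ) :
              Filter.Germ (𝓝 (0 : Cn n)) ℂ) * (g s : Filter.Germ (𝓝 (0 : Cn n)) ℂ)) →
          ∀ s : Fin k, s ≤ max i j → Γ s 0 = 0) :=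
  exists_ordered_monomial_generators_general n n k fb hf0 hfa hk
end
end

section
/- Let f : (ℂⁿ,0) → (ℂⁿ⁺¹,0) be a finite holomorphic map germ with irreducible image. Then deg f ≤ mult f ≤ gd(f). -/
open Filter Topology Set

noncomputable section

/-- The generic degree `gd(f)`: the minimum of `dim_ℂ 𝒪ₙ/⟨π ∘ f⟩` over all surjective
linear projections `π : ℂⁿ⁺¹ → ℂⁿ`. -/
def gdGerm {n : ℕ} (f : Cn n → Cn (n+1)) : Cardinal :=
  sInf {c : Cardinal | ∃ π : Cn (n+1) →ₗ[ℂ] Cn n, Function.Surjective π ∧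
    c = multGerm (fun x => π (f x))}

/-- `f` has degree `d`: on a representative, each point of a generic subset of the image
(open and dense in the image) has exactly `d` preimages. -/
def HasDeg {n p : ℕ} (f : Cn n → Cn p) (d : ℕ) : Prop :=
  ∃ U : Set (Cn n), IsOpen U ∧ 0 ∈ U ∧ ∃ W : Set (Cn p), IsOpen W ∧
    f '' U ⊆ closure (f '' U ∩ W) ∧
    ∀ y ∈ f '' U ∩ W, Set.ncard {x ∈ U | f x = y} = d

/-- Two sets have the same germ at `p`. -/
def GermSetEq {E : Type*} [TopologicalSpace E] (p : E) (X Y : Set E) : Prop :=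
  ∃ U ∈ 𝓝 p, X ∩ U = Y ∩ U

/-- `X` is a complex analytic subset of the open set `Ω`: it is closed in `Ω` and
locally the common zero set of holomorphic functions. -/
def IsAnalyticSetIn {E : Type*} [NormedAddCommGroup E] [NormedSpace ℂ E]
    (X Ω : Set E) : Prop :=
  IsOpen Ω ∧ X ⊆ Ω ∧ IsClosed (Subtype.val ⁻¹' X : Set Ω) ∧
  ∀ p ∈ Ω, ∃ U : Set E, IsOpen U ∧ p ∈ U ∧ U ⊆ Ω ∧
    ∃ S : Set (E → ℂ), (∀ g ∈ S, AnalyticOnNhd ℂ g U) ∧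
      X ∩ U = {x ∈ U | ∀ g ∈ S, g x = 0}

/-- The germ of `X` at `p` is irreducible: it is not the union of two strictly smaller
analytic germs. -/
def IrreducibleGermAt {E : Type*} [NormedAddCommGroup E] [NormedSpace ℂ E]
    (X : Set E) (p : E) : Prop :=
  ∀ X₁ X₂ : Set E, (∃ Ω₁, p ∈ Ω₁ ∧ IsAnalyticSetIn X₁ Ω₁) →
    (∃ Ω₂, p ∈ Ω₂ ∧ IsAnalyticSetIn X₂ Ω₂) →
    GermSetEq p X (X₁ ∪ X₂) → GermSetEq p X X₁ ∨ GermSetEq p X X₂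

/-- The image germ of `f` at `0` is irreducible. -/
def ImageIrreducible {n p : ℕ} (f : Cn n → Cn p) : Prop :=
  ∃ U : Set (Cn n), IsOpen U ∧ 0 ∈ U ∧ IrreducibleGermAt (f '' U) 0

/-!
Lift a basis of `𝒪ₙ / ⟨f⟩` to functions `b₁, …, bₘ`. On a small polydisc every bounded
holomorphic `g` is `∑ cⱼ bⱼ + ∑ aᵢ fᵢ` with constants `cⱼ` and with `aᵢ` bounded by a fixed multiple
of the bound of `g`: a power of each coordinate lies in `⟨f⟩`, so repeated division by the
coordinates leaves finitely many monomials to decompose. If `y` is small, iterating this division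
shows that a linear relation among the vectors `(bⱼ(z))ⱼ`, for `z` in the fibre over `y`, also holds
among the values `g(z)` of every `g`, hence is trivial; so the fibre has at most `m = mult f`
points.

That `f` has a degree is seen on a proper representative with connected domain `U`. The points of
`U` whose fibre meets the critical set have real codimension at least `2`, by comparing Hausdorff
dimensions, so their complement is connected. There the fibre cardinality is upper semicontinuous,
and near each point it is constant on a dense set; so it takes its minimum on a dense open set.

Finally `⟨π ∘ f⟩ ⊆ ⟨f⟩` gives `mult f ≤ gd f`.
-/

/-! ### Hausdorff dimension of analytic zero sets -/

theorem dimH_le_of_antilipschitzWith_restrict {X Y : Type*} [MetricSpace X] [MetricSpace Y]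
    {s : Set X} {φ : X → Y} {K : NNReal} (hφ : AntilipschitzWith K (s.domRestrict φ)) :
    dimH s ≤ dimH (φ '' s) := by
  rw [← range_domRestrict, ← image_univ]
  refine le_of_eq_of_le ?_ (hφ.le_dimH_image univ)
  simpa using isometry_subtype_coe.dimH_image (univ : Set s)

theorem dimH_le_of_forall_exists_mem_nhdsWithin {X : Type*} [MetricSpace X]
    [SecondCountableTopology X] {s : Set X} {c : ENNReal}
    (h : ∀ x ∈ s, ∃ t ∈ 𝓝[s] x, dimH t ≤ c) : dimH s ≤ c := by
  by_contra! hc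
  obtain ⟨x, hx, hxc⟩ := exists_mem_nhdsWithin_lt_dimH_of_lt_dimH hc
  obtain ⟨t, ht, htc⟩ := h x hx
  exact (hxc t ht).not_ge htc

theorem dimH_submodule {E : Type*} [NormedAddCommGroup E] [NormedSpace ℝ E] [FiniteDimensional ℝ E]
    (H : Submodule ℝ E) : dimH (H : Set E) = Module.finrank ℝ H := by
  rw [← Real.dimH_univ_eq_finrank H]
  simpa using isometry_subtype_coe.dimH_image (univ : Set H)

theorem exists_antilipschitzWith_restrict_of_injective {𝕜 E F : Type*} [RCLike 𝕜]
    [NormedAddCommGroup E] [NormedSpace 𝕜 E] [FiniteDimensional 𝕜 E]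
    [NormedAddCommGroup F] [NormedSpace 𝕜 F] {f : E → F} {f' : E →L[𝕜] F} {p : E}
    (hf : HasStrictFDerivAt f f' p) (hinj : Function.Injective f') :
    ∃ s ∈ 𝓝 p, ∃ K, AntilipschitzWith K (s.domRestrict f) := by
  obtain ⟨K, hK, hanti⟩ := f'.toLinearMap.exists_antilipschitzWith (LinearMap.ker_eq_bot.2 hinj)
  have hc : 0 < K⁻¹ / 2 := by positivity
  obtain ⟨s, hs, happrox⟩ := hf.approximates_deriv_on_nhds (.inr hc)
  refine ⟨s, hs, (K⁻¹ - K⁻¹ / 2)⁻¹, ?_⟩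
  convert! (hanti.domRestrict s).add_lipschitzWith happrox.lipschitz_sub
    (NNReal.half_lt_self (by positivity)) using 2
  exact (add_sub_cancel (f' _) (f _)).symm

theorem exists_iteratedFDeriv_ne_zero {𝕜 E G : Type*} [RCLike 𝕜] [NormedAddCommGroup E]
    [NormedSpace 𝕜 E] [NormedAddCommGroup G] [NormedSpace 𝕜 G] [CompleteSpace G] {g : E → G} {p : E}
    (hg : AnalyticAt 𝕜 g p) (hne : ¬ g =ᶠ[𝓝 p] 0) : ∃ k, iteratedFDeriv 𝕜 k g p ≠ 0 := by
  contrapose! hne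
  obtain ⟨_, r, hr⟩ := hg
  filter_upwards [Metric.eball_mem_nhds p hr.r_pos] with x hx
  have hsum := hr.hasSum_iteratedFDeriv (y := x - p) (by simpa [edist_eq_enorm_sub] using hx)
  simp only [hne, zero_apply, smul_zero, add_sub_cancel] at hsum
  exact hsum.unique hasSum_zero

section ZeroSet

variable {E G : Type*} [NormedAddCommGroup E] [NormedSpace ℂ E] [FiniteDimensional ℂ E]
  [NormedAddCommGroup G] [NormedSpace ℂ G]

theorem dimH_ker {φ : E →L[ℂ] ℂ} (hφ : φ ≠ 0) :
    dimH {x | φ x = 0} = (Module.finrank ℝ E - 2 : ℕ) := by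
  have hfin := Module.Dual.finrank_ker_add_one_of_ne_zero (f := φ.toLinearMap)
    (fun h => hφ (ContinuousLinearMap.coe_inj.1 h))
  have hset : {x | φ x = 0} = ((LinearMap.ker φ.toLinearMap).restrictScalars ℝ : Set E) := by
    ext; simp
  have hreal : Module.finrank ℝ ((LinearMap.ker φ.toLinearMap).restrictScalars ℝ) =
      2 * Module.finrank ℂ (LinearMap.ker φ.toLinearMap) := finrank_real_of_complex _
  rw [hset, dimH_submodule, hreal, finrank_real_of_complex E, ← hfin]
  simp [mul_add]

theorem exists_mem_nhds_dimH_zeros_le_of_hasStrictFDerivAt {g : E → G} {g' : E →L[ℂ] G} {p : E}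
    (hg : HasStrictFDerivAt g g' p) (hg' : g' ≠ 0) :
    ∃ V ∈ 𝓝 p, dimH {x ∈ V | g x = 0} ≤ (Module.finrank ℝ E - 2 : ℕ) := by
  obtain ⟨w, hw⟩ := DFunLike.ne_iff.1 hg'
  obtain ⟨φ, hφ⟩ := SeparatingDual.exists_eq_one (R := ℂ) hw
  set ψ : E →L[ℂ] ℂ := φ.comp g' with hψ
  have hψw : ψ w = 1 := hφ
  -- `Φ` is tangent to the identity and maps the zero set of `g` into the hyperplane `ker ψ`.
  set Φ : E → E := fun x => x + (φ (g x) - ψ x) • w with hΦ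
  have hΦ' : HasStrictFDerivAt Φ (ContinuousLinearMap.id ℂ E) p := by
    convert (hasStrictFDerivAt_id p).add
      (((φ.hasStrictFDerivAt.comp p hg).sub ψ.hasStrictFDerivAt).smul_const w) using 1
    · rfl
    · ext; simp [hψ]
  obtain ⟨V, hV, K, hK⟩ := exists_antilipschitzWith_restrict_of_injective hΦ' Function.injective_id
  have hKV : AntilipschitzWith K ({x ∈ V | g x = 0}.domRestrict Φ) :=
    fun x y => hK ⟨x, x.2.1⟩ ⟨y, y.2.1⟩
  refine ⟨V, hV, (dimH_le_of_antilipschitzWith_restrict hKV).trans ?_⟩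
  rw [← dimH_ker (φ := ψ) (by rintro h; simp [h] at hψw)]
  refine dimH_mono ?_
  rintro _ ⟨x, ⟨-, hx⟩, rfl⟩
  simp [hΦ, hx, hψw]

theorem dimH_zeros_le [CompleteSpace G] {g : E → G} {U : Set E} (hU : IsPreconnected U)
    (hg : AnalyticOnNhd ℂ g U) (hne : ∃ x ∈ U, g x ≠ 0) :
    dimH {x ∈ U | g x = 0} ≤ (Module.finrank ℝ E - 2 : ℕ) := by
  have : ProperSpace E := FiniteDimensional.proper ℂ E
  have hsub : {x ∈ U | g x = 0} ⊆ ⋃ k : ℕ,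
      {x ∈ U | iteratedFDeriv ℂ k g x = 0 ∧ iteratedFDeriv ℂ (k + 1) g x ≠ 0} := by
    rintro p ⟨hp, hp0⟩
    have hne_p : ¬ g =ᶠ[𝓝 p] 0 := by
      intro h
      obtain ⟨x, hx, hx0⟩ := hne
      exact hx0 (hg.eqOn_zero_of_preconnected_of_eventuallyEq_zero hU hp h hx)
    have hex := exists_iteratedFDeriv_ne_zero (hg p hp) hne_p
    classical
    obtain ⟨k, hk⟩ : ∃ k, Nat.find hex = k + 1 := by
      refine Nat.exists_eq_succ_of_ne_zero fun h0 => ?_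
      refine (h0 ▸ Nat.find_spec hex) ?_
      ext
      simpa using hp0
    exact mem_iUnion.2 ⟨k, hp, not_not.1 (Nat.find_min hex (by lia)), hk ▸ Nat.find_spec hex⟩
  refine (dimH_mono hsub).trans ?_
  rw [dimH_iUnion]
  refine iSup_le fun k => dimH_le_of_forall_exists_mem_nhdsWithin ?_
  rintro x ⟨hx, -, hx1⟩
  have hder : fderiv ℂ (iteratedFDeriv ℂ k g) x ≠ 0 := by
    intro h
    refine hx1 (ContinuousMultilinearMap.ext fun m => ?_)
    rw [iteratedFDeriv_succ_apply_left, h]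
    rfl
  obtain ⟨V, hV, hdim⟩ := exists_mem_nhds_dimH_zeros_le_of_hasStrictFDerivAt
    (hg.iteratedFDeriv k x hx).hasStrictFDerivAt hder
  refine ⟨_, inter_mem_nhdsWithin _ hV, (dimH_mono ?_).trans hdim⟩
  rintro y ⟨⟨-, hy, -⟩, hyV⟩
  exact ⟨hyV, hy⟩

theorem dimH_zeros_add_one_lt [Nontrivial E] [CompleteSpace G] {g : E → G} {U : Set E}
    (hU : IsPreconnected U) (hg : AnalyticOnNhd ℂ g U) (hne : ∃ x ∈ U, g x ≠ 0) :
    dimH {x ∈ U | g x = 0} + 1 < Module.finrank ℝ E := by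
  have hpos : 0 < Module.finrank ℂ E := Module.finrank_pos
  calc dimH {x ∈ U | g x = 0} + 1 ≤ (Module.finrank ℝ E - 2 : ℕ) + 1 := by
        gcongr; exact dimH_zeros_le hU hg hne
    _ < Module.finrank ℝ E := by
        rw [finrank_real_of_complex]
        exact_mod_cast (by lia : 2 * Module.finrank ℂ E - 2 + 1 < 2 * Module.finrank ℂ E)

theorem dense_compl_biUnion_zeros [Nontrivial E] [CompleteSpace G] {ι : Type*} {s : Set ι}
    {g : ι → E → G} {U : Set E} (hs : s.Countable) (hU : IsPreconnected U)
    (hg : ∀ i ∈ s, AnalyticOnNhd ℂ (g i) U) (hne : ∀ i ∈ s, ∃ x ∈ U, g i x ≠ 0) :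
    Dense (⋃ i ∈ s, {x ∈ U | g i x = 0})ᶜ := by
  have hpos : 0 < Module.finrank ℝ E := Module.finrank_pos
  refine dense_compl_of_dimH_lt_finrank ?_
  calc dimH (⋃ i ∈ s, {x ∈ U | g i x = 0}) = ⨆ i ∈ s, dimH {x ∈ U | g i x = 0} := dimH_bUnion hs _
    _ ≤ (Module.finrank ℝ E - 2 : ℕ) := iSup₂_le fun i hi => dimH_zeros_le hU (hg i hi) (hne i hi)
    _ < Module.finrank ℝ E := by norm_cast; lia

end ZeroSet

section ThinSet

variable {E : Type*} [NormedAddCommGroup E] [NormedSpace ℝ E] [FiniteDimensional ℝ E]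

theorem exists_disjoint_translate_segment {C N : Set E} {a b : E}
    (hC : dimH C + 1 < Module.finrank ℝ E) (hab : a ≠ b) (hN : N ∈ 𝓝 (0 : E)) :
    ∃ u ∈ N, Disjoint (segment ℝ (a + u) (b + u)) C := by
  obtain ⟨l, hl⟩ := SeparatingDual.exists_eq_one (R := ℝ) (sub_ne_zero.2 hab.symm)
  set H := LinearMap.ker l.toLinearMap with hH_def
  have hH : Module.finrank ℝ H + 1 = Module.finrank ℝ E :=
    Module.Dual.finrank_ker_add_one_of_ne_zero (f := l.toLinearMap)
      (by intro h; simpa [hl] using congr($h (b - a)))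
  let ψ : E →L[ℝ] H := (ContinuousLinearMap.id ℝ E - l.smulRight (b - a)).codRestrict H
    (by simp [hH_def, hl])
  have hψ (x : E) : (ψ x : E) = x - l x • (b - a) := rfl
  have hψab : ψ (b - a) = 0 := by ext; rw [hψ, hl, one_smul, sub_self, ZeroMemClass.coe_zero]
  have hψH (h : H) : ψ h = h := by
    have : l h = 0 := h.2
    ext; simp [hψ, this]
  have hdim : dimH (ψ '' C) < Module.finrank ℝ H := by
    refine (ψ.lipschitz.dimH_image_le C).trans_lt ?_
    rw [← hH, Nat.cast_add_one] at hC
    exact lt_of_add_lt_add_right hC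
  have hN' : {h : H | ((h - ψ a : H) : E) ∈ N} ∈ 𝓝 (ψ a) :=
    ContinuousAt.preimage_mem_nhds (by fun_prop) (by simpa using hN)
  obtain ⟨h, hhC, hhN⟩ := (dense_compl_of_dimH_lt_finrank hdim).inter_nhds_nonempty hN'
  refine ⟨_, hhN, disjoint_left.2 fun x hx hxC => hhC ⟨x, hxC, ?_⟩⟩
  rw [segment_eq_image'] at hx
  obtain ⟨t, -, rfl⟩ := hx
  simp [-map_sub, -AddSubgroupClass.coe_sub, map_add, hψH, hψab]

theorem isPreconnected_convex_diff {C V : Set E} (hC : dimH C + 1 < Module.finrank ℝ E)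
    (hV : Convex ℝ V) (hVC : IsOpen (V \ C)) : IsPreconnected (V \ C) := by
  refine isPreconnected_of_forall_pair fun a ha b hb => ?_
  obtain rfl | hab := eq_or_ne a b
  · exact ⟨{a}, by simpa using ha, rfl, rfl, isPreconnected_singleton⟩
  obtain ⟨ε, hε, hεa⟩ := Metric.isOpen_iff.1 hVC a ha
  obtain ⟨δ, hδ, hδb⟩ := Metric.isOpen_iff.1 hVC b hb
  obtain ⟨u, hu, hdisj⟩ := exists_disjoint_translate_segment hC hab
    (Metric.ball_mem_nhds 0 (lt_min hε hδ))
  rw [mem_ball_zero_iff, lt_min_iff] at hu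
  have hau : a + u ∈ Metric.ball a ε := by simpa using hu.1
  have hbu : b + u ∈ Metric.ball b δ := by simpa using hu.2
  refine ⟨segment ℝ a (a + u) ∪ segment ℝ (a + u) (b + u) ∪ segment ℝ (b + u) b,
    union_subset (union_subset ?_ ?_) ?_, .inl (.inl (left_mem_segment ..)),
    .inr (right_mem_segment ..), ?_⟩
  · exact ((convex_ball a ε).segment_subset (Metric.mem_ball_self hε) hau).trans hεa
  · exact subset_sdiff.2 ⟨hV.segment_subset (hεa hau).1 (hδb hbu).1, hdisj⟩
  · exact ((convex_ball b δ).segment_subset hbu (Metric.mem_ball_self hδ)).trans hδb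
  · have hseg (x y : E) : IsPreconnected (segment ℝ x y) := (convex_segment x y).isPreconnected
    exact ((hseg _ _).union _ (right_mem_segment ..) (left_mem_segment ..) (hseg _ _)).union
      _ (.inr (right_mem_segment ..)) (left_mem_segment ..) (hseg _ _)

theorem isPreconnected_diff {C U : Set E} (hC : dimH C + 1 < Module.finrank ℝ E)
    (hU : IsOpen U) (hUc : IsPreconnected U) (hUC : IsOpen (U \ C)) : IsPreconnected (U \ C) := by
  refine isPreconnected_of_forall_constant fun φ hφ a ha b hb => ?_
  have hdense : Dense Cᶜ := dense_compl_of_dimH_lt_finrank (le_self_add.trans_lt hC)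
  have hnhds {x : E} (hx : x ∈ U \ C) : {y ∈ U \ C | φ y = φ x} ∈ 𝓝 x :=
    inter_mem (hUC.mem_nhds hx) <| (hφ.continuousAt (hUC.mem_nhds hx)).preimage_mem_nhds
      ((isOpen_discrete {φ x}).mem_nhds rfl)
  -- `φ` is constant on `B \ C` for each ball `B ⊆ U`, so `closure G` is relatively clopen in `U`.
  set G := {x ∈ U \ C | φ x = φ a}
  have hGa : a ∈ interior (closure G) :=
    interior_mono subset_closure (mem_interior_iff_mem_nhds.2 (hnhds ha))
  have hsub : U ⊆ interior (closure G) := by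
    refine hUc.subset_of_closure_inter_subset isOpen_interior ⟨a, ha.1, hGa⟩ ?_
    rintro p ⟨hp, hpU⟩
    obtain ⟨ε, hε, hB⟩ := Metric.isOpen_iff.1 hU p hpU
    set B := Metric.ball p ε
    have hBC : B \ C = B ∩ (U \ C) := by grind
    have hBpre : IsPreconnected (B \ C) := isPreconnected_convex_diff hC (convex_ball p ε)
      (hBC ▸ Metric.isOpen_ball.inter hUC)
    obtain ⟨x, hxB, hxG⟩ : (B ∩ G).Nonempty := by
      have hpG : p ∈ closure G := closure_minimal interior_subset isClosed_closure hp
      exact mem_closure_iff.1 hpG B Metric.isOpen_ball (Metric.mem_ball_self hε)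
    have hBG : B \ C ⊆ G := fun y hy => ⟨⟨hB hy.1, hy.2⟩, hxG.2 ▸ hBpre.constant
      (hφ.mono (sdiff_subset_sdiff_left hB)) hy ⟨hxB, hxG.1.2⟩⟩
    have hBcl : B ⊆ closure G :=
      (hdense.open_subset_closure_inter Metric.isOpen_ball).trans (closure_mono hBG)
    exact interior_maximal hBcl Metric.isOpen_ball (Metric.mem_ball_self hε)
  obtain ⟨x, hxb, hxG⟩ := mem_closure_iff_nhds.1 (interior_subset (hsub hb.1)) _ (hnhds hb)
  exact hxG.2.symm.trans hxb.2

end ThinSet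

/-! ### Analytic maps with injective derivative -/

section Immersion

variable {E F : Type*} [NormedAddCommGroup E] [NormedSpace ℂ E] [FiniteDimensional ℂ E]
  [NormedAddCommGroup F] [NormedSpace ℂ F] [FiniteDimensional ℂ F]

theorem exists_analyticAt_local_inverse (hEF : Module.finrank ℂ E = Module.finrank ℂ F)
    {Φ : E → F} {p : E} (hΦ : AnalyticAt ℂ Φ p) (hinj : Function.Injective (fderiv ℂ Φ p)) :
    ∃ Ψ : F → E, AnalyticAt ℂ Ψ (Φ p) ∧ Ψ (Φ p) = p ∧ (∀ᶠ y in 𝓝 (Φ p), Φ (Ψ y) = y) ∧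
      ∀ᶠ x in 𝓝 p, Ψ (Φ x) = x := by
  have : CompleteSpace E := FiniteDimensional.complete ℂ E
  have : CompleteSpace F := FiniteDimensional.complete ℂ F
  set e : E ≃L[ℂ] F :=
    (LinearEquiv.ofInjectiveOfFinrankEq (fderiv ℂ Φ p).toLinearMap hinj hEF).toContinuousLinearEquiv
  have he : fderiv ℂ Φ p = e := rfl
  have hs : HasStrictFDerivAt Φ (e : E →L[ℂ] F) p := he ▸ hΦ.hasStrictFDerivAt
  exact ⟨hs.localInverse Φ e p,
    (hs.toOpenPartialHomeomorph Φ).analyticAt_symm' hs.mem_toOpenPartialHomeomorph_source hΦ he,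
    hs.localInverse_apply_image, hs.eventually_right_inverse, hs.eventually_left_inverse⟩

omit [FiniteDimensional ℂ E] in
theorem exists_forall_finrank_range_fderiv_le (f : E → F) {U : Set E} (hU : U.Nonempty) :
    ∃ p ∈ U, ∀ x ∈ U, Module.finrank ℂ (LinearMap.range (fderiv ℂ f x).toLinearMap) ≤
      Module.finrank ℂ (LinearMap.range (fderiv ℂ f p).toLinearMap) := by
  set rk : E → ℕ := fun x => Module.finrank ℂ (LinearMap.range (fderiv ℂ f x).toLinearMap)
  have hb : BddAbove (rk '' U) :=
    ⟨Module.finrank ℂ F, forall_mem_image.2 fun x _ => Submodule.finrank_le _⟩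
  obtain ⟨p, hp, hmax⟩ := Nat.sSup_mem (hU.image rk) hb
  exact ⟨p, hp, fun x hx => (le_csSup hb (mem_image_of_mem rk hx)).trans_eq hmax.symm⟩

theorem ker_comp_le_ker_of_finrank_range_le {𝕜 V W R : Type*} [Field 𝕜] [AddCommGroup V]
    [Module 𝕜 V] [FiniteDimensional 𝕜 V] [AddCommGroup W] [Module 𝕜 W] [AddCommGroup R]
    [Module 𝕜 R] {B : V →ₗ[𝕜] W} {L : W →ₗ[𝕜] R} (hLB : Function.Surjective (L ∘ₗ B))
    (hB : Module.finrank 𝕜 (LinearMap.range B) ≤ Module.finrank 𝕜 R) :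
    LinearMap.ker (L ∘ₗ B) ≤ LinearMap.ker B := by
  refine (Submodule.eq_of_le_of_finrank_le (LinearMap.ker_le_ker_comp B L) ?_).ge
  have hdimB := LinearMap.finrank_range_add_finrank_ker B
  have hdimLB := LinearMap.finrank_range_add_finrank_ker (L ∘ₗ B)
  rw [LinearMap.range_eq_top.2 hLB, finrank_top] at hdimLB
  lia

theorem eventually_eq_of_finrank_range_fderiv_le_of_fst {R K G : Type*}
    [NormedAddCommGroup R] [NormedSpace ℂ R] [FiniteDimensional ℂ R]
    [NormedAddCommGroup K] [NormedSpace ℂ K] [FiniteDimensional ℂ K]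
    [NormedAddCommGroup G] [NormedSpace ℂ G] {F : R × K → G} {L : G →L[ℂ] R} {q : R × K}
    (hF : ∀ᶠ z in 𝓝 q, DifferentiableAt ℂ F z) (hL : ∀ᶠ z in 𝓝 q, L (F z) = z.1)
    (hrank : ∀ᶠ z in 𝓝 q,
      Module.finrank ℂ (LinearMap.range (fderiv ℂ F z).toLinearMap) ≤ Module.finrank ℂ R) :
    ∀ᶠ k in 𝓝 q.2, F (q.1, k) = F q := by
  have hder : ∀ᶠ z in 𝓝 q, HasFDerivAt (fun k => F (z.1, k)) (0 : K →L[ℂ] G) z.2 := by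
    filter_upwards [hF, hL.eventually_nhds, hrank] with z hFz hLz hrz
    have hfst : L ∘L fderiv ℂ F z = ContinuousLinearMap.fst ℂ R K :=
      ((L.hasFDerivAt.comp z hFz.hasFDerivAt).congr_of_eventuallyEq
        (hLz.mono fun _ h => h.symm)).unique hasFDerivAt_fst
    have hker := ker_comp_le_ker_of_finrank_range_le (B := (fderiv ℂ F z).toLinearMap)
      (L := L.toLinearMap) (fun r => ⟨(r, 0), congr($hfst (r, 0))⟩) hrz
    have hinr : fderiv ℂ F z ∘L ContinuousLinearMap.inr ℂ R K = 0 := by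
      ext k
      exact hker (show L (fderiv ℂ F z (0, k)) = 0 from congr($hfst (0, k)))
    rw [← hinr]
    exact hFz.hasFDerivAt.comp z.2 (hasFDerivAt_prodMk_right z.1 z.2)
  obtain ⟨ρ, hρ, hball⟩ := Metric.eventually_nhds_iff_ball.1 hder
  have hmem {k : K} (hk : k ∈ Metric.ball q.2 ρ) : (q.1, k) ∈ Metric.ball q ρ := by
    rw [← ball_prod_same]
    exact ⟨Metric.mem_ball_self hρ, hk⟩
  have hzero : ∀ k ∈ Metric.ball q.2 ρ, HasFDerivAt (fun l => F (q.1, l)) (0 : K →L[ℂ] G) k :=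
    fun k hk => hball _ (hmem hk)
  filter_upwards [Metric.ball_mem_nhds q.2 hρ] with k hk
  exact Metric.isOpen_ball.is_const_of_fderiv_eq_zero (convex_ball q.2 ρ).isPreconnected
    (fun k hk => (hzero k hk).differentiableAt.differentiableWithinAt)
    (fun k hk => (hzero k hk).fderiv) hk (Metric.mem_ball_self hρ)

omit [FiniteDimensional ℂ F] in
theorem exists_coordinates_range_prod_ker {f : E → F} {p : E} (hf : AnalyticAt ℂ f p) :
    ∃ (L : F →L[ℂ] LinearMap.range (fderiv ℂ f p).toLinearMap)
      (Q : E →L[ℂ] LinearMap.ker (fderiv ℂ f p).toLinearMap)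
      (Ψ : LinearMap.range (fderiv ℂ f p).toLinearMap × LinearMap.ker (fderiv ℂ f p).toLinearMap
        → E), AnalyticAt ℂ Ψ (L (f p), Q p) ∧ Ψ (L (f p), Q p) = p ∧
      ∀ᶠ z in 𝓝 (L (f p), Q p), L (f (Ψ z)) = z.1 ∧ Q (Ψ z) = z.2 := by
  set A := fderiv ℂ f p
  obtain ⟨L, hL⟩ := Submodule.ClosedComplemented.of_finiteDimensional
    (LinearMap.range A.toLinearMap)
  obtain ⟨Q, hQ⟩ := Submodule.ClosedComplemented.of_finiteDimensional (LinearMap.ker A.toLinearMap)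
  have hΦ : AnalyticAt ℂ (fun x => (L (f x), Q x)) p :=
    ((L.analyticAt _).comp hf).prod (Q.analyticAt p)
  have hΦ' : fderiv ℂ (fun x => (L (f x), Q x)) p = (L ∘L A).prod Q :=
    ((L.hasFDerivAt.comp p hf.differentiableAt.hasFDerivAt).prodMk Q.hasFDerivAt).fderiv
  have hinj : Function.Injective (fderiv ℂ (fun x => (L (f x), Q x)) p) := by
    rw [hΦ', injective_iff_map_eq_zero]
    intro w hw
    have hAw : A w = 0 := congr(($((hL ⟨A w, w, rfl⟩).symm.trans congr(($hw).1)) : F))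
    exact congr(($((hQ ⟨w, hAw⟩).symm.trans congr(($hw).2)) : E))
  obtain ⟨Ψ, hΨ, hΨp, hΦΨ, -⟩ := exists_analyticAt_local_inverse
    (by rw [Module.finrank_prod, ← LinearMap.finrank_range_add_finrank_ker A.toLinearMap]) hΦ hinj
  exact ⟨L, Q, Ψ, hΨ, hΨp, hΦΨ.mono fun z hz => ⟨congr(($hz).1), congr(($hz).2)⟩⟩

theorem exists_injective_fderiv {f : E → F} {U : Set E} (hU : IsOpen U) (hne : U.Nonempty)
    (hf : AnalyticOnNhd ℂ f U) (hfin : ∀ y, {x ∈ U | f x = y}.Finite) :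
    ∃ p ∈ U, Function.Injective (fderiv ℂ f p) := by
  obtain ⟨p, hp, hmax⟩ := exists_forall_finrank_range_fderiv_le f hne
  refine ⟨p, hp, ?_⟩
  by_contra hninj
  have : Nontrivial (LinearMap.ker (fderiv ℂ f p).toLinearMap) :=
    Submodule.nontrivial_iff_ne_bot.2 fun h => hninj (LinearMap.ker_eq_bot.1 h)
  obtain ⟨L, Q, Ψ, hΨ, hΨp, hinv⟩ := exists_coordinates_range_prod_ker (hf p hp)
  set q := (L (f p), Q p)
  have hΨU : ∀ᶠ z in 𝓝 q, Ψ z ∈ U :=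
    hΨ.continuousAt.eventually_mem (hΨp.symm ▸ hU.mem_nhds hp)
  have hdiff : ∀ᶠ z in 𝓝 q, DifferentiableAt ℂ (f ∘ Ψ) z := by
    filter_upwards [hΨ.eventually_analyticAt, hΨU] with z hz hzU
      using (hf _ hzU).differentiableAt.comp z hz.differentiableAt
  have hrank : ∀ᶠ z in 𝓝 q, Module.finrank ℂ (LinearMap.range (fderiv ℂ (f ∘ Ψ) z).toLinearMap) ≤
      Module.finrank ℂ (LinearMap.range (fderiv ℂ f p).toLinearMap) := by
    filter_upwards [hΨ.eventually_analyticAt, hΨU] with z hz hzU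
    rw [fderiv_comp z (hf _ hzU).differentiableAt hz.differentiableAt]
    exact (Submodule.finrank_mono (LinearMap.range_comp_le_range _ _)).trans (hmax _ hzU)
  have hconst :=
    eventually_eq_of_finrank_range_fderiv_le_of_fst hdiff (hinv.mono fun _ hz => hz.1) hrank
  have hslice : Tendsto (fun k => (q.1, k)) (𝓝 q.2) (𝓝 q) := Continuous.tendsto (by fun_prop) _
  have := Module.punctured_nhds_neBot ℂ (LinearMap.ker (fderiv ℂ f p).toLinearMap)
  refine infinite_of_injOn_mapsTo (f := fun k => Ψ (q.1, k)) (fun k hk l hl hkl => ?_)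
    (fun k hk => ?_) (infinite_of_mem_nhds q.2 (hconst.and (hslice.eventually (hinv.and hΨU))))
    (hfin (f (Ψ q)))
  · exact hk.2.1.2.symm.trans ((congrArg Q hkl).trans hl.2.1.2)
  · exact ⟨hk.2.2, hk.1⟩

theorem exists_local_equations_of_injective_fderiv {f : E → F} {p : E} (hf : AnalyticAt ℂ f p)
    (hinj : Function.Injective (fderiv ℂ f p)) :
    ∃ (h : F → F) (ψ : F → E), AnalyticAt ℂ h (f p) ∧ ContinuousAt ψ (f p) ∧ ψ (f p) = p ∧
      (∀ᶠ y in 𝓝 (f p), h y = 0 → f (ψ y) = y) ∧ ∀ᶠ x in 𝓝 p, h (f x) = 0 := by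
  obtain ⟨Q, hQ⟩ := (LinearMap.range (fderiv ℂ f p).toLinearMap).exists_isCompl
  set Φ : E × Q → F := fun z => f z.1 + z.2
  have hf1 : AnalyticAt ℂ (fun z : E × Q => f z.1) (p, 0) :=
    hf.comp_of_eq analyticAt_fst rfl
  have hΦ : AnalyticAt ℂ Φ (p, 0) := hf1.add ((Q.subtypeL.analyticAt _).comp analyticAt_snd)
  have hΦp : Φ (p, 0) = f p := by simp [Φ]
  have hΦ' : HasFDerivAt Φ (fderiv ℂ f p ∘L .fst ℂ E Q + Q.subtypeL ∘L .snd ℂ E Q) (p, 0) :=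
    (HasFDerivAt.comp (f := Prod.fst) (p, (0 : Q)) hf.differentiableAt.hasFDerivAt
      hasFDerivAt_fst).add (Q.subtypeL.hasFDerivAt.comp (p, (0 : Q)) hasFDerivAt_snd)
  have hΦinj : Function.Injective (fderiv ℂ Φ (p, 0)) := by
    rw [hΦ'.fderiv, injective_iff_map_eq_zero]
    rintro ⟨w, q⟩ hwq
    have hfw : fderiv ℂ f p w = -q := eq_neg_of_add_eq_zero_left hwq
    have hfw0 : fderiv ℂ f p w = 0 :=
      Submodule.disjoint_def.1 hQ.disjoint _ ⟨w, rfl⟩ (hfw ▸ Q.neg_mem q.2)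
    have hw : w = 0 := hinj (hfw0.trans (map_zero _).symm)
    have hq : q = 0 := by simpa [hfw0] using hfw
    rw [hw, hq, Prod.mk_zero_zero]
  have hdim : Module.finrank ℂ (E × Q) = Module.finrank ℂ F := by
    rw [Module.finrank_prod,
      ← LinearMap.finrank_range_of_inj (f := (fderiv ℂ f p).toLinearMap) hinj,
      Submodule.finrank_add_eq_of_isCompl hQ]
  obtain ⟨Ψ, hΨ, hΨp, hΦΨ, hΨΦ⟩ := exists_analyticAt_local_inverse hdim hΦ hΦinj
  rw [hΦp] at hΨ hΨp hΦΨ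
  refine ⟨fun y => (Ψ y).2, fun y => (Ψ y).1, ?_, continuousAt_fst.comp hΨ.continuousAt,
    congrArg Prod.fst hΨp, ?_, ?_⟩
  · exact (Q.subtypeL.analyticAt _).comp (analyticAt_snd.comp hΨ)
  · filter_upwards [hΦΨ] with y hy hy0
    simpa [Φ, hy0] using hy
  · have hc : ContinuousAt (fun x : E => (x, (0 : Q))) p := by fun_prop
    filter_upwards [hc.eventually hΨΦ] with x hx
    simpa [Φ] using congr((($hx).2 : F))

end Immersion

theorem exists_isOpen_injOn_image_eq_zeros {E F : Type*} [NormedAddCommGroup E] [NormedSpace ℂ E]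
    [FiniteDimensional ℂ E] [NormedAddCommGroup F] [NormedSpace ℂ F] [FiniteDimensional ℂ F]
    {f : E → F} {p : E} {O : Set E} (hf : AnalyticAt ℂ f p)
    (hinj : Function.Injective (fderiv ℂ f p)) (hO : O ∈ 𝓝 p) :
    ∃ (N : Set E) (h : F → F), IsOpen N ∧ p ∈ N ∧ N ⊆ O ∧ InjOn f N ∧ AnalyticAt ℂ h (f p) ∧
      ∀ᶠ y in 𝓝 (f p), y ∈ f '' N ↔ h y = 0 := by
  have : CompleteSpace F := FiniteDimensional.complete ℂ F
  obtain ⟨h, ψ, hh, hψ, hψp, hψf, hhf⟩ := exists_local_equations_of_injective_fderiv hf hinj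
  obtain ⟨s, hs, K, hK⟩ := exists_antilipschitzWith_restrict_of_injective hf.hasStrictFDerivAt hinj
  obtain ⟨N, hNsub, hN, hpN⟩ := mem_nhds_iff.1 (inter_mem (inter_mem hO hs) hhf)
  refine ⟨N, h, hN, hpN, fun x hx => (hNsub hx).1.1,
    (injOn_iff_injective.2 hK.injective).mono fun x hx => (hNsub hx).1.2, hh, ?_⟩
  filter_upwards [hψf, hψ.eventually_mem (hψp.symm ▸ hN.mem_nhds hpN)] with y hy hyN
  exact ⟨by rintro ⟨x, hx, rfl⟩; exact (hNsub hx).2, fun h0 => ⟨ψ y, hyN, hy h0⟩⟩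

theorem analyticAt_continuousLinearMap_det {𝕜 E G : Type*} [NontriviallyNormedField 𝕜]
    [CompleteSpace 𝕜] [NormedAddCommGroup E] [NormedSpace 𝕜 E] [FiniteDimensional 𝕜 E]
    [NormedAddCommGroup G] [NormedSpace 𝕜 G] {A : G → E →L[𝕜] E} {x : G} (hA : AnalyticAt 𝕜 A x) :
    AnalyticAt 𝕜 (fun x => (A x).det) x := by
  set b := Module.finBasis 𝕜 E
  have hentry (i j) : AnalyticAt 𝕜 (fun x => b.coord i (A x (b j))) x :=
    (((b.coord i).toContinuousLinearMap ∘L ContinuousLinearMap.apply 𝕜 E (b j)).analyticAt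
      _).fun_comp hA
  have hdet (x) : (A x).det =
      ∑ σ : Equiv.Perm _, (Equiv.Perm.sign σ : 𝕜) * ∏ i, b.coord (σ i) (A x (b i)) := by
    rw [ContinuousLinearMap.det, ← LinearMap.det_toMatrix b, Matrix.det_apply']
    simp only [LinearMap.toMatrix_apply, Module.Basis.coord_apply, ContinuousLinearMap.coe_coe]
  simp only [hdet]
  exact Finset.analyticAt_fun_sum _ fun σ _ =>
    analyticAt_const.mul (Finset.analyticAt_fun_prod _ fun i _ => hentry (σ i) i)

theorem exists_analyticOnNhd_injective_of_ne_zero {E F : Type*} [NormedAddCommGroup E]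
    [NormedSpace ℂ E] [FiniteDimensional ℂ E] [NormedAddCommGroup F] [NormedSpace ℂ F]
    [FiniteDimensional ℂ F] {f : E → F} {U : Set E} {p : E} (hf : AnalyticOnNhd ℂ f U)
    (hinj : Function.Injective (fderiv ℂ f p)) :
    ∃ δ : E → ℂ, AnalyticOnNhd ℂ δ U ∧ δ p ≠ 0 ∧
      ∀ x, δ x ≠ 0 → Function.Injective (fderiv ℂ f x) := by
  have : CompleteSpace F := FiniteDimensional.complete ℂ F
  obtain ⟨A, hA⟩ := (fderiv ℂ f p).toLinearMap.exists_leftInverse_of_injective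
    (LinearMap.ker_eq_bot.2 hinj)
  refine ⟨fun x => (A.toContinuousLinearMap ∘L fderiv ℂ f x).det, fun x hx => ?_, ?_,
    fun x hx => ?_⟩
  · exact analyticAt_continuousLinearMap_det <|
      ((ContinuousLinearMap.compL ℂ E F E A.toContinuousLinearMap).analyticAt _).fun_comp
        (hf x hx).fderiv
  · have hid : A.toContinuousLinearMap ∘L fderiv ℂ f p = .id ℂ E :=
      ContinuousLinearMap.coe_inj.1 hA
    simp only [hid]
    simp [ContinuousLinearMap.det]
  · have hker := LinearMap.det_eq_zero_iff_ker_ne_bot.not_left.1 hx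
    exact .of_comp (f := A) (LinearMap.ker_eq_bot.1 hker)

theorem dimH_inter_preimage_image_le {E F : Type*} [NormedAddCommGroup E] [NormedSpace ℂ E]
    [FiniteDimensional ℂ E] [NormedAddCommGroup F] [NormedSpace ℂ F] [CompleteSpace F]
    {f : E → F} {U C : Set E} (hf : AnalyticOnNhd ℂ f U) (hCU : C ⊆ U)
    (himm : ∀ x ∈ U \ C, Function.Injective (fderiv ℂ f x)) :
    dimH (U ∩ f ⁻¹' (f '' C)) ≤ dimH C := by
  have : ProperSpace E := FiniteDimensional.proper ℂ E
  have himage : dimH (f '' C) ≤ dimH C := dimH_image_le_of_locally_lipschitzOn fun x hx =>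
    let ⟨K, t, ht, hK⟩ := (hf x (hCU hx)).hasStrictFDerivAt.exists_lipschitzOnWith
    ⟨K, t, mem_nhdsWithin_of_mem_nhds ht, hK⟩
  have hsub : U ∩ f ⁻¹' (f '' C) ⊆ C ∪ (U \ C) ∩ f ⁻¹' (f '' C) := fun x hx =>
    (em (x ∈ C)).imp id fun hxC => ⟨⟨hx.1, hxC⟩, hx.2⟩
  refine (dimH_mono hsub).trans ((dimH_union _ _).trans_le (max_le le_rfl ?_))
  refine dimH_le_of_forall_exists_mem_nhdsWithin fun x hx => ?_
  obtain ⟨s, hs, K, hK⟩ := exists_antilipschitzWith_restrict_of_injective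
    (hf x hx.1.1).hasStrictFDerivAt (himm x hx.1)
  refine ⟨s ∩ f ⁻¹' (f '' C), inter_mem (mem_nhdsWithin_of_mem_nhds hs)
    (mem_of_superset self_mem_nhdsWithin inter_subset_right), ?_⟩
  refine (dimH_le_of_antilipschitzWith_restrict (φ := f) (K := K) ?_).trans
    ((dimH_mono ?_).trans himage)
  · exact fun a b => hK ⟨a, a.2.1⟩ ⟨b, b.2.1⟩
  · rintro _ ⟨a, ha, rfl⟩
    exact ha.2

/-! ### Generic fibres of proper representatives -/

/-- The number of points of `U` that `f` maps to `y`; it is `0` if there are infinitely many. -/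
def fibreCard {α β : Type*} (f : α → β) (U : Set α) (y : β) : ℕ :=
  {x ∈ U | f x = y}.ncard

theorem fibreCard_eq_ncard_setOf_mem_image {α β ι : Type*} {f : α → β} {U : Set α} {N : ι → Set α}
    {y : β} (hNU : ∀ i, N i ⊆ U) (hdisj : Pairwise (Function.onFun Disjoint N))
    (hinj : ∀ i, InjOn f (N i)) (hcover : {x ∈ U | f x = y} ⊆ ⋃ i, N i) :
    fibreCard f U y = {i | y ∈ f '' N i}.ncard := by
  choose s hsN hsy using fun i : {i | y ∈ f '' N i} => i.2
  refine (ncard_congr' (Equiv.ofBijective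
    (fun i => (⟨s i, hNU i (hsN i), hsy i⟩ : {x ∈ U | f x = y})) ⟨fun i j hij => ?_, ?_⟩)).symm
  · by_contra hne
    exact (hdisj (Subtype.coe_ne_coe.2 hne)).ne_of_mem (hsN i) (hsN j) (congrArg Subtype.val hij)
  · rintro ⟨x, hxU, hxy⟩
    obtain ⟨i, hi⟩ := mem_iUnion.1 (hcover ⟨hxU, hxy⟩)
    have hyi : y ∈ f '' N i := ⟨x, hi, hxy⟩
    exact ⟨⟨i, hyi⟩, Subtype.ext <| hinj i (hsN ⟨i, hyi⟩) hi ((hsy ⟨i, hyi⟩).trans hxy.symm)⟩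

theorem subset_closure_setOf_eq_of_isPreconnected {X α : Type*} [TopologicalSpace X] {c : X → α}
    {R : Set X} {d : α} (hRc : IsPreconnected R) (hR : IsOpen R)
    (hloc : ∀ x ∈ R, ∃ k, ∀ᶠ z in 𝓝 x, z ∈ closure {z | c z = k})
    (hd : IsOpen {x ∈ R | c x = d}) (hne : {x ∈ R | c x = d}.Nonempty) :
    R ⊆ closure {x ∈ R | c x = d} := by
  set G := {x ∈ R | c x = d}
  have hGu : G ⊆ interior (closure G) := hd.subset_interior_closure
  refine (hRc.subset_of_closure_inter_subset isOpen_interior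
    (hne.mono fun x hx => ⟨hx.1, hGu hx⟩) ?_).trans interior_subset
  rintro x ⟨hxu, hxR⟩
  have hxG : x ∈ closure G := closure_minimal interior_subset isClosed_closure hxu
  obtain ⟨k, hk⟩ := hloc x hxR
  obtain ⟨z, hzk, hzG⟩ := mem_closure_iff_nhds.1 hxG _ hk
  obtain ⟨w, hwG, hwk⟩ := mem_closure_iff.1 hzk G hd hzG
  obtain rfl : d = k := hwG.2.symm.trans hwk
  refine mem_interior_iff_mem_nhds.2 ?_
  filter_upwards [hk, hR.mem_nhds hxR] with z hz hzR
  exact hR.inter_closure ⟨hzR, hz⟩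

theorem exists_closedBall_forall_sphere_le_dist {X Y : Type*} [MetricSpace X] [ProperSpace X]
    [MetricSpace Y] {f : X → Y} {a : X} {V : Set X} (hV : V ∈ 𝓝 a) (hf : ContinuousOn f V)
    (hfin : {x ∈ V | f x = f a}.Finite) :
    ∃ ε > 0, ∃ δ > 0, Metric.closedBall a ε ⊆ V ∧
      ∀ x ∈ Metric.sphere a ε, δ ≤ dist (f x) (f a) := by
  have hisol : ({x ∈ V | f x = f a} \ {a})ᶜ ∈ 𝓝 a :=
    (hfin.subset sdiff_subset).isClosed.isOpen_compl.mem_nhds fun ha => ha.2 rfl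
  obtain ⟨ε, hε, hεV⟩ := Metric.nhds_basis_closedBall.mem_iff.1 (inter_mem hV hisol)
  have hsV : Metric.sphere a ε ⊆ V := fun x hx => (hεV (Metric.sphere_subset_closedBall hx)).1
  have hpos {x} (hx : x ∈ Metric.sphere a ε) : 0 < dist (f x) (f a) := dist_pos.2 fun hfx =>
    (hεV (Metric.sphere_subset_closedBall hx)).2
      ⟨⟨hsV hx, hfx⟩, Metric.ne_of_mem_sphere hx hε.ne'⟩
  have hεV' : Metric.closedBall a ε ⊆ V := fun x hx => (hεV hx).1
  obtain hempty | hne := (Metric.sphere a ε).eq_empty_or_nonempty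
  · exact ⟨ε, hε, 1, one_pos, hεV', by simp [hempty]⟩
  · have hdist : ContinuousOn (fun x => dist (f x) (f a)) (Metric.sphere a ε) :=
      (continuous_id.dist continuous_const).comp_continuousOn (hf.mono hsV)
    obtain ⟨x, hx, hmin⟩ := (isCompact_sphere a ε).exists_isMinOn hne hdist
    exact ⟨ε, hε, dist (f x) (f a), hpos hx, hεV', fun _ hy => hmin hy⟩

section ProperRep

variable {E F : Type*} [NormedAddCommGroup E] [NormedSpace ℂ E]
  [NormedAddCommGroup F] [NormedSpace ℂ F]

/-- `f : U → B` is a connected proper analytic representative with finite fibres. Properness is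
encoded by `f` being defined and analytic on the compact set `closure U`, all of whose points over
`B` lie in `U`. -/
structure ProperRep (f : E → F) (U : Set E) (B : Set F) : Prop where
  isOpen : IsOpen U
  isPreconnected : IsPreconnected U
  isOpen_target : IsOpen B
  isCompact_closure : IsCompact (closure U)
  analyticOnNhd_closure : AnalyticOnNhd ℂ f (closure U)
  closure_inter_preimage : closure U ∩ f ⁻¹' B = U
  finite_fibre : ∀ y, {x ∈ U | f x = y}.Finite

namespace ProperRep

variable {f : E → F} {U : Set E} {B : Set F}

theorem analyticOnNhd (h : ProperRep f U B) : AnalyticOnNhd ℂ f U :=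
  h.analyticOnNhd_closure.mono subset_closure

theorem mapsTo (h : ProperRep f U B) : MapsTo f U B := fun _ hx =>
  (h.closure_inter_preimage.superset hx).2

theorem isOpen_inter_preimage (h : ProperRep f U B) {W : Set F} (hW : IsOpen W) :
    IsOpen (U ∩ f ⁻¹' W) :=
  h.analyticOnNhd.continuousOn.isOpen_inter_preimage h.isOpen hW

theorem eventually_fibre_subset (h : ProperRep f U B) {y : F} (hy : y ∈ B) {O : Set E}
    (hO : IsOpen O) (hfib : {x ∈ U | f x = y} ⊆ O) : ∀ᶠ y' in 𝓝 y, {x ∈ U | f x = y'} ⊆ O := by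
  have hclosed : IsClosed (f '' (closure U \ O)) :=
    ((h.isCompact_closure.diff hO).image_of_continuousOn
      (h.analyticOnNhd_closure.continuousOn.mono sdiff_subset)).isClosed
  have hyn : y ∉ f '' (closure U \ O) := by
    rintro ⟨x, ⟨hx, hxO⟩, rfl⟩
    exact hxO (hfib ⟨h.closure_inter_preimage.subset ⟨hx, hy⟩, rfl⟩)
  filter_upwards [hclosed.isOpen_compl.mem_nhds hyn] with y' hy' x hx
  by_contra hxO
  exact hy' ⟨x, ⟨subset_closure hx.1, hxO⟩, hx.2⟩

theorem isOpen_diff_image (h : ProperRep f U B) {C : Set E} (hCU : C ⊆ U) (hC : IsOpen (U \ C)) :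
    IsOpen (B \ f '' C) := by
  refine isOpen_iff_mem_nhds.2 fun y ⟨hy, hyC⟩ => ?_
  filter_upwards [h.isOpen_target.mem_nhds hy, h.eventually_fibre_subset hy hC
    fun x hx => ⟨hx.1, fun hxC => hyC ⟨x, hxC, hx.2⟩⟩] with y' hy' hfib
  exact ⟨hy', by rintro ⟨x, hx, rfl⟩; exact (hfib ⟨hCU hx, rfl⟩).2 hx⟩

variable [FiniteDimensional ℂ E] [FiniteDimensional ℂ F]

theorem exists_fibreCard_eq_ncard_zeros (h : ProperRep f U B) {y : F} (hy : y ∈ B)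
    (himm : ∀ x ∈ U, f x = y → Function.Injective (fderiv ℂ f x)) :
    ∃ g : {x ∈ U | f x = y} → F → F, (∀ i, AnalyticAt ℂ (g i) y) ∧
      ∀ᶠ y' in 𝓝 y, fibreCard f U y' = {i | g i y' = 0}.ncard := by
  have : Finite {x ∈ U | f x = y} := h.finite_fibre y
  obtain ⟨D, hD, hdisj⟩ := (h.finite_fibre y).t2_separation
  have hsheet (i : {x ∈ U | f x = y}) := exists_isOpen_injOn_image_eq_zeros
    (h.analyticOnNhd i i.2.1) (himm i i.2.1 i.2.2)
    (((hD i).2.inter h.isOpen).mem_nhds ⟨(hD i).1, i.2.1⟩)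
  choose N g hNo hiN hND hinj hg himage using hsheet
  have hval (i : {x ∈ U | f x = y}) : f i = y := i.2.2
  simp only [hval] at hg himage
  refine ⟨g, hg, ?_⟩
  filter_upwards [eventually_all.2 himage, h.eventually_fibre_subset hy (isOpen_iUnion hNo)
    fun x hx => mem_iUnion.2 ⟨⟨x, hx⟩, hiN _⟩] with y' himage' hcover
  have hpair : Pairwise (Function.onFun Disjoint N) := fun i j hij =>
    (hdisj i.2 j.2 (Subtype.coe_ne_coe.2 hij)).mono (fun x hx => (hND i hx).1)
      fun x hx => (hND j hx).1
  rw [fibreCard_eq_ncard_setOf_mem_image (fun i x hx => (hND i hx).2) hpair hinj hcover]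
  simp only [himage']

theorem eventually_fibreCard_le (h : ProperRep f U B) {y : F} (hy : y ∈ B)
    (himm : ∀ x ∈ U, f x = y → Function.Injective (fderiv ℂ f x)) :
    ∀ᶠ y' in 𝓝 y, fibreCard f U y' ≤ fibreCard f U y := by
  obtain ⟨g, -, hcount⟩ := h.exists_fibreCard_eq_ncard_zeros hy himm
  have : Finite {x ∈ U | f x = y} := h.finite_fibre y
  filter_upwards [hcount] with y' hy'
  exact hy'.trans_le ((ncard_le_card _).trans_eq (Nat.card_coe_set_eq _))

theorem exists_eventually_mem_closure_fibreCard_eq [Nontrivial E] (h : ProperRep f U B) {x : E}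
    (hx : x ∈ U) (himm : ∀ x' ∈ U, f x' = f x → Function.Injective (fderiv ℂ f x')) :
    ∃ k, ∀ᶠ z in 𝓝 x, z ∈ closure {z | fibreCard f U (f z) = k} := by
  have : CompleteSpace F := FiniteDimensional.complete ℂ F
  have : Finite {x' ∈ U | f x' = f x} := h.finite_fibre (f x)
  obtain ⟨g, hg, hcount⟩ := h.exists_fibreCard_eq_ncard_zeros (h.mapsTo hx) himm
  obtain ⟨ρ, hρ, hball⟩ := Metric.eventually_nhds_iff_ball.1
    (((h.analyticOnNhd x hx).continuousAt.eventually
      (hcount.and (eventually_all.2 fun i => (hg i).eventually_analyticAt))).and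
        (h.isOpen.mem_nhds hx))
  set V := Metric.ball x ρ
  have hgf (i) : AnalyticOnNhd ℂ (fun z => g i (f z)) V := fun z hz =>
    ((hball z hz).1.2 i).fun_comp (h.analyticOnNhd z (hball z hz).2)
  set bad := {i | ∃ z ∈ V, g i (f z) ≠ 0}
  have hdense : Dense (⋃ i ∈ bad, {z ∈ V | g i (f z) = 0})ᶜ :=
    dense_compl_biUnion_zeros (toFinite bad).countable (convex_ball x ρ).isPreconnected
      (fun i _ => hgf i) fun i hi => hi
  refine ⟨badᶜ.ncard, ?_⟩
  filter_upwards [Metric.ball_mem_nhds x hρ] with z hz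
  refine closure_mono (fun w hw => ?_) (Metric.isOpen_ball.inter_closure ⟨hz, hdense z⟩)
  have hzeros : {i | g i (f w) = 0} = badᶜ := by
    ext i
    refine ⟨fun hi hb => hw.2 (mem_iUnion₂.2 ⟨i, hb, hw.1, hi⟩), fun hi => ?_⟩
    exact by_contra fun h0 => hi ⟨w, hw.1, h0⟩
  exact (hball w hw.1).1.1.trans (congrArg ncard hzeros)

theorem exists_immersive_locus [Nontrivial E] (h : ProperRep f U B) (hne : U.Nonempty) :
    ∃ B' ⊆ B, IsOpen B' ∧ IsPreconnected (U ∩ f ⁻¹' B') ∧ U ⊆ closure (U ∩ f ⁻¹' B') ∧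
      ∀ x ∈ U ∩ f ⁻¹' B', Function.Injective (fderiv ℂ f x) := by
  obtain ⟨p, hp, hinj⟩ := exists_injective_fderiv h.isOpen hne h.analyticOnNhd h.finite_fibre
  obtain ⟨δ, hδ, hδp, hδinj⟩ := exists_analyticOnNhd_injective_of_ne_zero h.analyticOnNhd hinj
  set S := {x ∈ U | δ x = 0}
  have himm : ∀ x ∈ U \ S, Function.Injective (fderiv ℂ f x) := fun x hx =>
    hδinj x fun h0 => hx.2 ⟨hx.1, h0⟩
  have hSo : IsOpen (U \ S) := by
    rw [show U \ S = U ∩ δ ⁻¹' {0}ᶜ by grind]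
    exact hδ.continuousOn.isOpen_inter_preimage h.isOpen isOpen_compl_singleton
  have hSU : S ⊆ U := fun x hx => hx.1
  have hB' : IsOpen (B \ f '' S) := h.isOpen_diff_image hSU hSo
  have hthin : dimH (U ∩ f ⁻¹' (f '' S)) + 1 < Module.finrank ℝ E :=
    (add_le_add_left (dimH_inter_preimage_image_le h.analyticOnNhd hSU himm) 1).trans_lt
      (dimH_zeros_add_one_lt h.isPreconnected hδ ⟨p, hp, hδp⟩)
  have hR : U ∩ f ⁻¹' (B \ f '' S) = U \ (U ∩ f ⁻¹' (f '' S)) := by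
    ext x
    exact ⟨fun hx => ⟨hx.1, fun hx' => hx.2.2 hx'.2⟩,
      fun hx => ⟨hx.1, h.mapsTo hx.1, fun hx' => hx.2 ⟨hx.1, hx'⟩⟩⟩
  refine ⟨B \ f '' S, sdiff_subset, hB', ?_, ?_, fun x hx =>
    himm x ⟨hx.1, fun hxS => hx.2.2 ⟨x, hxS, rfl⟩⟩⟩
  · have hRo := h.isOpen_inter_preimage hB'
    rw [hR] at hRo ⊢
    exact isPreconnected_diff hthin h.isOpen h.isPreconnected hRo
  · have hdense := dense_compl_of_dimH_lt_finrank (le_self_add.trans_lt hthin)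
    rw [hR]
    exact hdense.open_subset_closure_inter h.isOpen

theorem exists_generic_fibreCard (h : ProperRep f U B) (hne : U.Nonempty) :
    ∃ (d : ℕ) (W : Set F), IsOpen W ∧ f '' U ⊆ closure (f '' U ∩ W) ∧
      ∀ y ∈ f '' U ∩ W, fibreCard f U y = d := by
  cases subsingleton_or_nontrivial E
  · refine ⟨1, univ, isOpen_univ, by rw [inter_univ]; exact subset_closure, ?_⟩
    rintro _ ⟨⟨x', hx', rfl⟩, -⟩
    exact ncard_eq_one.2 ⟨x', subset_antisymm (fun z _ => Subsingleton.elim z x')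
      (singleton_subset_iff.2 ⟨hx', rfl⟩)⟩
  obtain ⟨B', hB'B, hB', hRc, hRd, himm⟩ := h.exists_immersive_locus hne
  set R := U ∩ f ⁻¹' B'
  have himm' : ∀ y ∈ B', ∀ x ∈ U, f x = y → Function.Injective (fderiv ℂ f x) :=
    fun y hy x hx hxy => himm x ⟨hx, hxy.symm.subst (motive := (· ∈ B')) hy⟩
  have hRne : R.Nonempty := closure_nonempty_iff.1 (hne.mono hRd)
  obtain ⟨x₀, hx₀, hmin⟩ := (measure fun x => fibreCard f U (f x)).wf.has_min R hRne
  set d := fibreCard f U (f x₀)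
  set W := {y ∈ B' | ∀ᶠ y' in 𝓝 y, fibreCard f U y' ≤ d}
  have hW : IsOpen W := hB'.inter isOpen_setOfPred_eventually_nhds
  have hG : U ∩ f ⁻¹' W = {x ∈ R | fibreCard f U (f x) = d} := by
    ext x
    refine ⟨fun ⟨hxU, hxB, hx⟩ => ⟨⟨hxU, hxB⟩,
      le_antisymm hx.self_of_nhds (not_lt.1 (hmin x ⟨hxU, hxB⟩))⟩, fun ⟨hxR, hx⟩ =>
      ⟨hxR.1, hxR.2, ?_⟩⟩
    exact hx ▸ h.eventually_fibreCard_le (hB'B hxR.2) (himm' _ hxR.2)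
  have hRG : R ⊆ closure (U ∩ f ⁻¹' W) := by
    have hGo := h.isOpen_inter_preimage hW
    rw [hG] at hGo ⊢
    exact subset_closure_setOf_eq_of_isPreconnected hRc (h.isOpen_inter_preimage hB')
      (fun x hx => h.exists_eventually_mem_closure_fibreCard_eq hx.1 (himm' _ hx.2)) hGo
      ⟨x₀, hx₀, rfl⟩
  refine ⟨d, W, hW, ?_, ?_⟩
  · rintro _ ⟨x, hx, rfl⟩
    rw [← image_inter_preimage]
    exact ((h.analyticOnNhd x hx).continuousAt.continuousWithinAt).mem_closure_image
      (closure_minimal hRG isClosed_closure (hRd hx))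
  · rintro _ ⟨⟨x, hx, rfl⟩, hxW⟩
    exact (hG.subset ⟨hx, hxW⟩).2

end ProperRep

theorem exists_properRep [ProperSpace E] [CompleteSpace F] {f : E → F} {a : E} {V : Set E}
    (hf : AnalyticAt ℂ f a) (hV : V ∈ 𝓝 a) (hfin : ∀ y, {x ∈ V | f x = y}.Finite) :
    ∃ U B, ProperRep f U B ∧ a ∈ U ∧ U ⊆ V := by
  obtain ⟨ε, hε, δ, hδ, hεV, hsph⟩ := exists_closedBall_forall_sphere_le_dist
    (inter_mem hV hf.eventually_analyticAt) (fun x hx => hx.2.continuousAt.continuousWithinAt)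
    ((hfin (f a)).subset fun x hx => ⟨hx.1.1, hx.2⟩)
  have han : AnalyticOnNhd ℂ f (Metric.closedBall a ε) := fun x hx => (hεV hx).2
  set U₀ : Set E := Metric.ball a ε ∩ f ⁻¹' Metric.ball (f a) δ
  have hU₀ : IsOpen U₀ := (han.continuousOn.mono
    Metric.ball_subset_closedBall).isOpen_inter_preimage Metric.isOpen_ball Metric.isOpen_ball
  have haU₀ : a ∈ U₀ := ⟨Metric.mem_ball_self hε, Metric.mem_ball_self hδ⟩
  set U := connectedComponentIn U₀ a
  have hUU₀ : U ⊆ U₀ := connectedComponentIn_subset _ _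
  have hcl : closure U ⊆ Metric.closedBall a ε := closure_minimal
    ((hUU₀.trans inter_subset_left).trans Metric.ball_subset_closedBall) Metric.isClosed_closedBall
  have hclU : closure U ∩ f ⁻¹' Metric.ball (f a) δ ⊆ U := by
    rintro x ⟨hx, hfx⟩
    have hxU₀ : x ∈ U₀ := ⟨lt_of_le_of_ne (hcl hx) fun h => (hsph x h).not_gt hfx, hfx⟩
    have hpre : IsPreconnected (insert x U) := isPreconnected_connectedComponentIn.subset_closure
      (subset_insert _ _) (insert_subset hx subset_closure)
    exact hpre.subset_connectedComponentIn (mem_insert_of_mem _ (mem_connectedComponentIn haU₀))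
      (insert_subset hxU₀ hUU₀) (mem_insert _ _)
  have hUV : U ⊆ V := fun x hx => (hεV (hcl (subset_closure hx))).1
  refine ⟨U, Metric.ball (f a) δ, ?_, mem_connectedComponentIn haU₀, hUV⟩
  exact {
    isOpen := hU₀.connectedComponentIn
    isPreconnected := isPreconnected_connectedComponentIn
    isOpen_target := Metric.isOpen_ball
    isCompact_closure := (isCompact_closedBall a ε).of_isClosed_subset isClosed_closure hcl
    analyticOnNhd_closure := han.mono hcl
    closure_inter_preimage := hclU.antisymm (subset_inter subset_closure fun x hx => (hUU₀ hx).2)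
    finite_fibre := fun y => (hfin y).subset fun _ hx => ⟨hUV hx.1, hx.2⟩ }

end ProperRep

/-! ### Division with bounds on polydiscs -/

section Polydisc

variable {ι : Type*} [DecidableEq ι]

/-- The quotient of `g x - g (x with x k = 0)` by `x k`, extended by the partial derivative. -/
def coordDslope (k : ι) (g : (ι → ℂ) → ℂ) (x : ι → ℂ) : ℂ :=
  dslope (fun t => g (Function.update x k t)) 0 (x k)

theorem update_zero_add_mul_coordDslope (k : ι) (g : (ι → ℂ) → ℂ) (x : ι → ℂ) :
    g (Function.update x k 0) + x k * coordDslope k g x = g x := by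
  have h := sub_smul_dslope (fun t => g (Function.update x k t)) 0 (x k)
  simp only [sub_zero, smul_eq_mul, Function.update_eq_self] at h
  rw [coordDslope, h, add_sub_cancel]

variable {κ μ : Type*} [Fintype ι] [Fintype κ] [Fintype μ]
  {f : κ → (ι → ℂ) → ℂ} {b : μ → (ι → ℂ) → ℂ} {r K K' : ℝ} {g g' : (ι → ℂ) → ℂ}

theorem update_mem_polydisc {x : ι → ℂ} (hx : x ∈ Metric.ball 0 r) (i : ι) {t : ℂ}
    (ht : t ∈ Metric.ball 0 r) : Function.update x i t ∈ Metric.ball 0 r := by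
  have hr := Metric.pos_of_mem_ball ht
  rw [mem_ball_zero_iff, pi_norm_lt_iff hr] at hx ⊢
  rw [mem_ball_zero_iff] at ht
  exact (Function.forall_update_iff x fun _ v => ‖v‖ < r).2 ⟨ht, fun j _ => hx j⟩

/-- `g` is bounded by `K` and separately holomorphic on the polydisc of radius `r`. Separate
holomorphy suffices below, and it is visibly preserved by division by a coordinate. -/
structure BoundedSepHolo (r K : ℝ) (g : (ι → ℂ) → ℂ) : Prop where
  norm_le : ∀ x ∈ Metric.ball 0 r, ‖g x‖ ≤ K
  differentiableOn : ∀ x ∈ Metric.ball 0 r, ∀ i,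
    DifferentiableOn ℂ (fun t => g (Function.update x i t)) (Metric.ball 0 r)

theorem norm_dslope_le_of_norm_le {φ : ℂ → ℂ} (hφ : DifferentiableOn ℂ φ (Metric.ball 0 r))
    (hK : ∀ t ∈ Metric.ball 0 r, ‖φ t‖ ≤ K) {t : ℂ} (ht : t ∈ Metric.ball 0 r) :
    ‖dslope φ 0 t‖ ≤ 2 * K / r := by
  refine Complex.norm_dslope_le_div_of_mapsTo_ball hφ (fun s hs => ?_) ht
  have h0 := hK 0 (Metric.mem_ball_self (Metric.pos_of_mem_ball hs))
  rw [Metric.mem_closedBall, dist_eq_norm, two_mul]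
  exact (norm_sub_le _ _).trans (add_le_add (hK s hs) h0)

namespace BoundedSepHolo

theorem mono (h : BoundedSepHolo r K g) (hK : K ≤ K') : BoundedSepHolo r K' g :=
  ⟨fun x hx => (h.norm_le x hx).trans hK, h.differentiableOn⟩

theorem add (h : BoundedSepHolo r K g) (h' : BoundedSepHolo r K' g') :
    BoundedSepHolo r (K + K') (g + g') :=
  ⟨fun x hx => norm_add_le_of_le (h.norm_le x hx) (h'.norm_le x hx),
    fun x hx i => (h.differentiableOn x hx i).add (h'.differentiableOn x hx i)⟩

theorem mul (h : BoundedSepHolo r K g) (h' : BoundedSepHolo r K' g') :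
    BoundedSepHolo r (K * K') (g * g') :=
  ⟨fun x hx => norm_mul_le_of_le (h.norm_le x hx) (h'.norm_le x hx),
    fun x hx i => (h.differentiableOn x hx i).mul (h'.differentiableOn x hx i)⟩

protected theorem const (c : ℂ) : BoundedSepHolo r ‖c‖ fun _ : ι → ℂ => c :=
  ⟨fun _ _ => le_rfl, fun _ _ _ => differentiableOn_const c⟩

theorem coord (i : ι) : BoundedSepHolo r r fun x : ι → ℂ => x i := by
  refine ⟨fun x hx => (norm_le_pi_norm x i).trans (mem_ball_zero_iff.1 hx).le, fun x _ j => ?_⟩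
  obtain rfl | hij := eq_or_ne i j
  · simp only [Function.update_self]
    exact differentiableOn_id
  · simp [hij]

theorem update_zero (hr : 0 < r) (h : BoundedSepHolo r K g) (k : ι) :
    BoundedSepHolo r K fun x => g (Function.update x k 0) := by
  have h0 := Metric.mem_ball_self (x := (0 : ℂ)) hr
  refine ⟨fun x hx => h.norm_le _ (update_mem_polydisc hx k h0), fun x hx j => ?_⟩
  obtain rfl | hjk := eq_or_ne j k
  · simp
  · simpa only [Function.update_comm hjk] using
      h.differentiableOn _ (update_mem_polydisc hx k h0) j

theorem norm_dslope_update_le (h : BoundedSepHolo r K g) {x : ι → ℂ} (hx : x ∈ Metric.ball 0 r)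
    (k : ι) {t : ℂ} (ht : t ∈ Metric.ball 0 r) :
    ‖dslope (fun s => g (Function.update x k s)) 0 t‖ ≤ 2 * K / r :=
  norm_dslope_le_of_norm_le (h.differentiableOn x hx k)
    (fun _ hs => h.norm_le _ (update_mem_polydisc hx k hs)) ht

theorem differentiableOn_dslope_update (h : BoundedSepHolo r K g) {x : ι → ℂ}
    (hx : x ∈ Metric.ball 0 r) (k : ι) :
    DifferentiableOn ℂ (dslope (fun s => g (Function.update x k s)) 0) (Metric.ball 0 r) :=
  have hr : 0 < r := Metric.pos_of_mem_ball hx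
  (Complex.differentiableOn_dslope (Metric.ball_mem_nhds 0 hr)).2 (h.differentiableOn x hx k)

theorem norm_dslope_update_sub_le (h : BoundedSepHolo r K g) {x : ι → ℂ}
    (hx : x ∈ Metric.ball 0 r) (k : ι) {t : ℂ} (ht : t ∈ Metric.ball 0 r) :
    ‖dslope (fun s => g (Function.update x k s)) 0 t -
      dslope (fun s => g (Function.update x k s)) 0 0‖ ≤ ‖t‖ * (2 * (2 * K / r) / r) := by
  rw [← sub_smul_dslope, sub_zero, norm_smul]
  gcongr
  exact norm_dslope_le_of_norm_le (h.differentiableOn_dslope_update hx k)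
    (fun _ hs => h.norm_dslope_update_le hx k hs) ht

theorem differentiableOn_dslope_update_update_of_ne_zero (h : BoundedSepHolo r K g) {x : ι → ℂ}
    (hx : x ∈ Metric.ball 0 r) {j k : ι} (hjk : j ≠ k) {w : ℂ} (hw : w ∈ Metric.ball 0 r)
    (hw0 : w ≠ 0) :
    DifferentiableOn ℂ
      (fun t => dslope (fun s => g (Function.update (Function.update x j t) k s)) 0 w)
      (Metric.ball 0 r) := by
  have hx0 := update_mem_polydisc hx k (Metric.mem_ball_self (Metric.pos_of_mem_ball hw))
  simp only [dslope_of_ne _ hw0, slope, vsub_eq_sub, Function.update_comm hjk]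
  exact ((h.differentiableOn _ (update_mem_polydisc hx k hw) j).sub
    (h.differentiableOn _ hx0 j)).const_smul (w - 0)⁻¹

theorem differentiableOn_dslope_update_update_zero (h : BoundedSepHolo r K g) {x : ι → ℂ}
    (hx : x ∈ Metric.ball 0 r) {j k : ι} (hjk : j ≠ k) :
    DifferentiableOn ℂ
      (fun t => dslope (fun s => g (Function.update (Function.update x j t) k s)) 0 0)
      (Metric.ball 0 r) := by
  have hball : ∀ᶠ w in 𝓝[≠] (0 : ℂ), w ∈ Metric.ball 0 r :=
    mem_nhdsWithin_of_mem_nhds (Metric.ball_mem_nhds 0 (Metric.pos_of_mem_ball hx))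
  have hlim : TendstoUniformlyOn
      (fun (w : ℂ) t => dslope (fun s => g (Function.update (Function.update x j t) k s)) 0 w)
      (fun t => dslope (fun s => g (Function.update (Function.update x j t) k s)) 0 0)
      (𝓝[≠] 0) (Metric.ball 0 r) := by
    rw [Metric.tendstoUniformlyOn_iff]
    intro ε hε
    have hsmall : ∀ᶠ w in 𝓝[≠] (0 : ℂ), ‖w‖ * (2 * (2 * K / r) / r) < ε :=
      (Continuous.tendsto' (by fun_prop) _ _ (by simp)).eventually_lt_const hε
        |>.filter_mono nhdsWithin_le_nhds
    filter_upwards [hball, hsmall] with w hw hwε t ht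
    rw [dist_comm, dist_eq_norm]
    exact (h.norm_dslope_update_sub_le (update_mem_polydisc hx j ht) k hw).trans_lt hwε
  refine hlim.tendstoLocallyUniformlyOn.differentiableOn ?_ Metric.isOpen_ball
  filter_upwards [hball, self_mem_nhdsWithin] with w hw hw0
  exact h.differentiableOn_dslope_update_update_of_ne_zero hx hjk hw hw0

protected theorem coordDslope (h : BoundedSepHolo r K g) (k : ι) :
    BoundedSepHolo r (2 * K / r) (coordDslope k g) := by
  have hmem {x : ι → ℂ} (hx : x ∈ Metric.ball 0 r) (i : ι) : x i ∈ Metric.ball 0 r :=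
    mem_ball_zero_iff.2 ((norm_le_pi_norm x i).trans_lt (mem_ball_zero_iff.1 hx))
  refine ⟨fun x hx => h.norm_dslope_update_le hx k (hmem hx k), fun x hx j => ?_⟩
  unfold coordDslope
  obtain rfl | hjk := eq_or_ne j k
  · simpa only [Function.update_idem, Function.update_self] using
      h.differentiableOn_dslope_update hx j
  simp only [Function.update_of_ne hjk.symm]
  by_cases hxk : x k = 0
  · rw [hxk]
    exact h.differentiableOn_dslope_update_update_zero hx hjk
  · exact h.differentiableOn_dslope_update_update_of_ne_zero hx hjk (hmem hx k) hxk

end BoundedSepHolo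

/-- The algebra of bounded separately holomorphic functions on the polydisc of radius `r`. -/
def boundedSepHolo (ι : Type*) [Fintype ι] [DecidableEq ι] (r : ℝ) :
    Subalgebra ℂ ((ι → ℂ) → ℂ) where
  carrier := {g | ∃ K, BoundedSepHolo r K g}
  mul_mem' := fun ⟨_, h⟩ ⟨_, h'⟩ => ⟨_, h.mul h'⟩
  add_mem' := fun ⟨_, h⟩ ⟨_, h'⟩ => ⟨_, h.add h'⟩
  algebraMap_mem' c := ⟨_, BoundedSepHolo.const c⟩

theorem coord_mem_boundedSepHolo (i : ι) : (fun x => x i) ∈ boundedSepHolo ι r :=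
  ⟨_, BoundedSepHolo.coord i⟩

theorem monomial_mem_boundedSepHolo (α : ι → ℕ) :
    (fun x => ∏ i, x i ^ α i) ∈ boundedSepHolo ι r := by
  simpa only [Finset.prod_fn, Pi.pow_apply] using prod_mem fun i (_ : i ∈ Finset.univ) =>
    pow_mem (coord_mem_boundedSepHolo (r := r) i) (α i)

/-- `u` is a linear combination of the `b j` plus a combination of the `f i` whose coefficients are
holomorphic and bounded by `K` on the polydisc of radius `r`. -/
def BoundedDecomp (f : κ → (ι → ℂ) → ℂ) (b : μ → (ι → ℂ) → ℂ) (r K : ℝ) (u : (ι → ℂ) → ℂ) : Prop :=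
  ∃ (c : μ → ℂ) (a : κ → (ι → ℂ) → ℂ), (∀ i, BoundedSepHolo r K (a i)) ∧
    ∀ x ∈ Metric.ball 0 r, u x = ∑ j, c j * b j x + ∑ i, a i x * f i x

/-- The products of `u` with bounded functions of the coordinates in `D` decompose, with bounds
proportional to those of the functions. -/
def UniformDecomp (f : κ → (ι → ℂ) → ℂ) (b : μ → (ι → ℂ) → ℂ) (r : ℝ) (D : Set ι)
    (u : (ι → ℂ) → ℂ) : Prop :=
  ∃ C : ℝ, ∀ K g, BoundedSepHolo r K g → DependsOn g D →
    BoundedDecomp f b r (C * K) fun x => u x * g x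

theorem BoundedDecomp.add {u u' : (ι → ℂ) → ℂ} (h : BoundedDecomp f b r K u)
    (h' : BoundedDecomp f b r K' u') : BoundedDecomp f b r (K + K') fun x => u x + u' x := by
  obtain ⟨c, a, ha, h⟩ := h
  obtain ⟨c', a', ha', h'⟩ := h'
  refine ⟨c + c', a + a', fun i => (ha i).add (ha' i), fun x hx => ?_⟩
  simp only [h x hx, h' x hx, Pi.add_apply, add_mul, Finset.sum_add_distrib]
  ring

theorem uniformDecomp_empty {u : (ι → ℂ) → ℂ} (hu : ∃ K, BoundedDecomp f b r K u) :
    UniformDecomp f b r ∅ u := by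
  obtain ⟨C, c, a, ha, h⟩ := hu
  refine ⟨C, fun K g hg hdep => ?_⟩
  have hconst (x : ι → ℂ) : g x = g 0 := hdep (by simp)
  refine ⟨fun j => g 0 * c j, fun i x => a i x * g x, fun i => (ha i).mul hg, fun x hx => ?_⟩
  simp only [h x hx, add_mul, Finset.sum_mul, hconst x]
  congr 1 <;> exact Finset.sum_congr rfl fun _ _ => by ring

theorem uniformDecomp_of_eq_sum {e : κ → (ι → ℂ) → ℂ} (he : ∀ i, e i ∈ boundedSepHolo ι r)
    {u : (ι → ℂ) → ℂ} (hu : ∀ x ∈ Metric.ball 0 r, u x = ∑ i, e i x * f i x) (D : Set ι) :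
    UniformDecomp f b r D u := by
  choose C he using he
  obtain ⟨M, hM⟩ := Finite.exists_le C
  refine ⟨M, fun K g hg _ => ⟨0, fun i x => e i x * g x, fun i => ?_, fun x hx => ?_⟩⟩
  · exact ((he i).mono (hM i)).mul hg
  · simp only [hu x hx, Finset.sum_mul, Pi.zero_apply, zero_mul, Finset.sum_const_zero, zero_add]
    exact Finset.sum_congr rfl fun _ _ => by ring

theorem UniformDecomp.insert_of_coord_mul (hr : 0 < r) {u : (ι → ℂ) → ℂ} {D : Set ι} {k : ι}
    (h : UniformDecomp f b r D u) (hk : UniformDecomp f b r (insert k D) fun x => x k * u x) :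
    UniformDecomp f b r (insert k D) u := by
  obtain ⟨C, h⟩ := h
  obtain ⟨C', hk⟩ := hk
  refine ⟨C + C' * (2 / r), fun K g hg hdep => ?_⟩
  have hdep_update {x y : ι → ℂ} (hxy : ∀ i ∈ D, x i = y i) (t : ℂ) :
      g (Function.update x k t) = g (Function.update y k t) := by
    refine hdep fun i hi => ?_
    obtain rfl | hik := eq_or_ne i k
    · simp
    · simpa [hik] using hxy i (hi.resolve_left hik)
  have hrest := h K _ (hg.update_zero hr k) fun x y hxy => hdep_update hxy 0
  have hquot := hk (2 * K / r) _ (hg.coordDslope k) fun x y hxy => by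
    simp only [coordDslope, hdep_update fun i hi => hxy i (mem_insert_of_mem k hi),
      hxy k (mem_insert k D)]
  have hbound : (C + C' * (2 / r)) * K = C * K + C' * (2 * K / r) := by ring
  rw [hbound]
  convert hrest.add hquot using 2 with x
  rw [← update_zero_add_mul_coordDslope k g x]
  ring

theorem UniformDecomp.insert_of_pow (hr : 0 < r) {D : Set ι} {k : ι} {N : ℕ} {u : (ι → ℂ) → ℂ}
    (h : ∀ s < N, UniformDecomp f b r D fun x => x k ^ s * u x)
    (hN : UniformDecomp f b r (insert k D) fun x => x k ^ N * u x) :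
    UniformDecomp f b r (insert k D) u := by
  induction N generalizing u with
  | zero => simpa using hN
  | succ N ih =>
    refine .insert_of_coord_mul hr (by simpa using h 0 N.succ_pos) (ih (fun s hs => ?_) ?_)
    · simpa only [pow_succ, mul_assoc] using h (s + 1) (by lia)
    · simpa only [pow_succ, mul_assoc] using hN

theorem prod_pow_single_add (k : ι) (s : ℕ) (α : ι → ℕ) (x : ι → ℂ) :
    ∏ i, x i ^ (Pi.single k s + α : ι → ℕ) i = x k ^ s * ∏ i, x i ^ α i := by
  simp_rw [Pi.add_apply, pow_add, Finset.prod_mul_distrib]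
  simp [Pi.single_apply, pow_ite]

theorem uniformDecomp_monomial (hr : 0 < r) {N : ℕ}
    (hpow : ∀ k (D : Set ι) (u), u ∈ boundedSepHolo ι r →
      UniformDecomp f b r D fun x => x k ^ N * u x)
    (hmon : ∀ α : ι → ℕ, (∀ i, α i < N) → ∃ K, BoundedDecomp f b r K fun x => ∏ i, x i ^ α i)
    (D : Set ι) (α : ι → ℕ) : UniformDecomp f b r D fun x => ∏ i, x i ^ α i := by
  induction D, D.toFinite using Set.Finite.induction_on generalizing α with
  | empty =>
    by_cases hα : ∀ i, α i < N
    · exact uniformDecomp_empty (hmon α hα)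
    · push Not at hα
      obtain ⟨k, hk⟩ := hα
      obtain ⟨β, rfl⟩ : ∃ β : ι → ℕ, α = Pi.single k N + β :=
        exists_add_of_le <| update_le_iff.2 ⟨hk, fun _ _ => Nat.zero_le _⟩
      simpa only [prod_pow_single_add] using hpow k ∅ _ (monomial_mem_boundedSepHolo β)
  | @insert k D _ _ ih =>
    refine .insert_of_pow hr (fun s _ => ?_) (hpow _ _ _ (monomial_mem_boundedSepHolo α))
    simp_rw [← prod_pow_single_add]
    exact ih _

theorem exists_forall_boundedDecomp (hr : 0 < r) {N : ℕ}
    (hpow : ∀ k, ∃ e : κ → (ι → ℂ) → ℂ, (∀ i, e i ∈ boundedSepHolo ι r) ∧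
      ∀ x ∈ Metric.ball 0 r, x k ^ N = ∑ i, e i x * f i x)
    (hmon : ∀ α : ι → ℕ, (∀ i, α i < N) → ∃ K, BoundedDecomp f b r K fun x => ∏ i, x i ^ α i) :
    ∃ C, ∀ K g, BoundedSepHolo r K g → BoundedDecomp f b r (C * K) g := by
  have hpow_mul (k : ι) (D : Set ι) (u) (hu : u ∈ boundedSepHolo ι r) :
      UniformDecomp f b r D fun x => x k ^ N * u x := by
    obtain ⟨e, he, hek⟩ := hpow k
    refine uniformDecomp_of_eq_sum (fun i => mul_mem (he i) hu) (fun x hx => ?_) D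
    rw [hek x hx, Finset.sum_mul]
    exact Finset.sum_congr rfl fun i _ => mul_right_comm _ _ _
  obtain ⟨C, hC⟩ := uniformDecomp_monomial hr hpow_mul hmon univ 0
  exact ⟨C, fun K g hg => by simpa using hC K g hg (dependsOn_univ g)⟩

theorem linearIndependent_eval_boundedSepHolo :
    LinearIndependent ℂ fun (z : ι → ℂ) (g : boundedSepHolo ι r) => (g : (ι → ℂ) → ℂ) z := by
  let eval (z : ι → ℂ) : boundedSepHolo ι r →* ℂ :=
    (Pi.evalMonoidHom (fun _ : ι → ℂ => ℂ) z).comp (boundedSepHolo ι r).val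
  refine (linearIndependent_monoidHom (boundedSepHolo ι r) ℂ).comp eval fun z w hzw => ?_
  exact funext fun i => DFunLike.congr_fun hzw ⟨fun x => x i, coord_mem_boundedSepHolo i⟩

theorem BoundedSepHolo.sum_mul_const {C : ℝ} {a : κ → (ι → ℂ) → ℂ}
    (ha : ∀ i, BoundedSepHolo r C (a i)) (y : κ → ℂ) :
    BoundedSepHolo r (C * ∑ i, ‖y i‖) fun x => ∑ i, a i x * y i := by
  refine ⟨fun x hx => ?_, fun x hx i =>
    DifferentiableOn.fun_sum fun j _ => ((ha j).differentiableOn x hx i).mul_const _⟩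
  rw [Finset.mul_sum]
  exact norm_sum_le_of_le _ fun i _ => norm_mul_le_of_le ((ha i).norm_le x hx) le_rfl

-- A relation among the values of the `b j` on a fibre bounds its own value at `g` by half of what
-- is a priori known, so iterating the division forces it to vanish on every `g`.
theorem norm_sum_mul_le_of_forall_boundedDecomp {C : ℝ}
    (hdiv : ∀ K g, BoundedSepHolo r K g → BoundedDecomp f b r (C * K) g) {y : κ → ℂ}
    (hy : (∑ i, ‖y i‖) * C ≤ 1 / 2) {s : Finset (ι → ℂ)} (hs : ∀ z ∈ s, z ∈ Metric.ball 0 r)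
    (hfs : ∀ z ∈ s, ∀ i, f i z = y i) {c : (ι → ℂ) → ℂ} (hc : ∀ j, ∑ z ∈ s, c z * b j z = 0)
    (N : ℕ) {g : (ι → ℂ) → ℂ} (hg : BoundedSepHolo r K g) :
    ‖∑ z ∈ s, c z * g z‖ ≤ (∑ z ∈ s, ‖c z‖) * (K * (1 / 2) ^ N) := by
  induction N generalizing g K with
  | zero =>
    simp only [pow_zero, mul_one, Finset.sum_mul]
    exact norm_sum_le_of_le _ fun z hz => norm_mul_le_of_le le_rfl (hg.norm_le z (hs z hz))
  | succ N ih =>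
    obtain ⟨l, a, ha, hgl⟩ := hdiv K g hg
    have hsum : ∑ z ∈ s, c z * g z = ∑ z ∈ s, c z * ∑ i, a i z * y i := by
      have hterm (z) (hz : z ∈ s) : c z * g z =
          ∑ j, l j * (c z * b j z) + c z * ∑ i, a i z * y i := by
        simp only [hgl z (hs z hz), hfs z hz, mul_add, Finset.mul_sum, mul_left_comm]
      rw [Finset.sum_congr rfl hterm, Finset.sum_add_distrib, Finset.sum_comm]
      simp only [← Finset.mul_sum, hc, mul_zero, Finset.sum_const_zero, zero_add]
    have hbound {x : ι → ℂ} (hx : x ∈ Metric.ball 0 r) : C * K * ∑ i, ‖y i‖ ≤ K * (1 / 2) := by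
      have hK : 0 ≤ K := (norm_nonneg _).trans (hg.norm_le x hx)
      linear_combination K * hy
    have hstep : BoundedSepHolo r (K * (1 / 2)) fun x => ∑ i, a i x * y i := by
      have h := BoundedSepHolo.sum_mul_const ha y
      exact ⟨fun x hx => (h.norm_le x hx).trans (hbound hx), h.differentiableOn⟩
    rw [hsum, pow_succ', ← mul_assoc K]
    exact ih hstep

theorem mk_fibre_le_of_forall_boundedDecomp {C : ℝ}
    (hdiv : ∀ K g, BoundedSepHolo r K g → BoundedDecomp f b r (C * K) g) {y : κ → ℂ}
    (hy : (∑ i, ‖y i‖) * C ≤ 1 / 2) :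
    Cardinal.mk {x ∈ Metric.ball 0 r | ∀ i, f i x = y i} ≤ Fintype.card μ := by
  have hindep : LinearIndepOn ℂ (fun z j => b j z) {x ∈ Metric.ball 0 r | ∀ i, f i x = y i} := by
    rw [linearIndepOn_iff']
    intro s c hs hc
    refine linearIndependent_iff'.1 (linearIndependent_eval_boundedSepHolo (r := r)) s c ?_
    ext ⟨g, K, hg⟩
    have hlim : Tendsto (fun N : ℕ => (∑ z ∈ s, ‖c z‖) * (K * (1 / 2) ^ N)) atTop (𝓝 0) := by
      simpa using ((tendsto_pow_atTop_nhds_zero_of_lt_one (r := (1 / 2 : ℝ)) (by norm_num)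
        (by norm_num)).const_mul K).const_mul (∑ z ∈ s, ‖c z‖)
    have hle := ge_of_tendsto' hlim fun N => norm_sum_mul_le_of_forall_boundedDecomp hdiv hy
      (fun z hz => (hs hz).1) (fun z hz => (hs hz).2)
      (fun j => by simpa using congrFun hc j) N hg
    simpa using norm_le_zero_iff.1 hle
  have hle := hindep.cardinal_lift_le_rank
  rw [rank_fun'] at hle
  simpa using hle

end Polydisc

/-! ### Germs of holomorphic functions -/

section Germ

variable {n p q : ℕ}

/-- The algebra of functions that are holomorphic near `0`, of which `Ogerm n` is the quotient by
the functions vanishing near `0`. -/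
def analyticFunctions (n : ℕ) : Subalgebra ℂ (Cn n → ℂ) where
  carrier := {g | AnalyticAt ℂ g 0}
  mul_mem' := AnalyticAt.mul
  add_mem' := AnalyticAt.add
  algebraMap_mem' _ := analyticAt_const

/-- The germ at `0` of a function that is holomorphic near `0`. -/
def toGerm : analyticFunctions n →ₐ[ℂ] Ogerm n where
  toFun g := ⟨(g.1 : Filter.Germ (𝓝 (0 : Cn n)) ℂ), g.1, g.2, rfl⟩
  map_one' := rfl
  map_mul' _ _ := rfl
  map_zero' := rfl
  map_add' _ _ := rfl
  commutes' c := by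
    rw [Algebra.algebraMap_eq_smul_one, Algebra.algebraMap_eq_smul_one]
    rfl

theorem toGerm_surjective : Function.Surjective (toGerm (n := n)) := by
  rintro ⟨_, g, hg, rfl⟩
  exact ⟨⟨g, hg⟩, rfl⟩

theorem toGerm_eq_toGerm_iff {g h : analyticFunctions n} :
    toGerm g = toGerm h ↔ g.1 =ᶠ[𝓝 0] h.1 :=
  Subtype.ext_iff.trans Filter.Germ.coe_eq

theorem isUnit_toGerm {g : analyticFunctions n} (hg : g.1 0 ≠ 0) : IsUnit (toGerm g) := by
  refine IsUnit.of_mul_eq_one (toGerm ⟨g.1⁻¹, AnalyticAt.inv g.2 hg⟩) ?_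
  rw [← map_mul, ← map_one toGerm, toGerm_eq_toGerm_iff]
  filter_upwards [g.2.continuousAt.eventually_ne hg] with x hx
  exact mul_inv_cancel₀ hx

theorem apply_mem_analyticFunctions {f : Cn n → Cn p} (hf : AnalyticAt ℂ f 0) (i : Fin p) :
    (fun x => f x i) ∈ analyticFunctions n :=
  ((EuclideanSpace.proj i : Cn p →L[ℂ] ℂ).analyticAt _).comp hf

theorem coordIdeal_eq_span_range {f : Cn n → Cn p} (hf : AnalyticAt ℂ f 0) :
    coordIdeal f =
      Ideal.span (range fun i => toGerm ⟨fun x => f x i, apply_mem_analyticFunctions hf i⟩) := by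
  refine congrArg Ideal.span (ext fun G => exists_congr fun i => ?_)
  rw [Subtype.ext_iff, eq_comm]
  rfl

theorem toGerm_mem_coordIdeal_iff {f : Cn n → Cn p} (hf : AnalyticAt ℂ f 0)
    {g : analyticFunctions n} : toGerm g ∈ coordIdeal f ↔
      ∃ a : Fin p → analyticFunctions n, ∀ᶠ x in 𝓝 0, g.1 x = ∑ i, (a i).1 x * f x i := by
  rw [coordIdeal_eq_span_range hf, Ideal.mem_span_range_iff_exists_fun,
    (toGerm_surjective.comp_left (α := Fin p)).exists]
  refine exists_congr fun a => ?_
  simp only [Function.comp_apply, ← map_mul, ← map_sum, toGerm_eq_toGerm_iff]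
  rw [eventuallyEq_comm]
  refine eventually_congr (.of_forall fun x => ?_)
  simp

theorem coordIdeal_comp_le {f : Cn n → Cn p} (hf : AnalyticAt ℂ f 0) (π : Cn p →ₗ[ℂ] Cn q) :
    coordIdeal (fun x => π (f x)) ≤ coordIdeal f := by
  have hπf : AnalyticAt ℂ (fun x => π (f x)) 0 := (π.toContinuousLinearMap.analyticAt _).comp hf
  rw [coordIdeal_eq_span_range hπf, Ideal.span_le]
  rintro _ ⟨i, rfl⟩
  refine (toGerm_mem_coordIdeal_iff hf).2
    ⟨fun j => algebraMap ℂ _ (π (EuclideanSpace.single j 1) i), .of_forall fun x => ?_⟩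
  have hfx : f x = ∑ j, f x j • EuclideanSpace.single j (1 : ℂ) := by
    ext k
    simp [Pi.single_apply]
  change π (f x) i = _
  conv_lhs => rw [hfx]
  simp [mul_comm]

theorem multGerm_le_multGerm_comp {f : Cn n → Cn p} (hf : AnalyticAt ℂ f 0)
    (π : Cn p →ₗ[ℂ] Cn q) : multGerm f ≤ multGerm fun x => π (f x) :=
  LinearMap.rank_le_of_surjective
    (Ideal.Quotient.factorₐ ℂ (coordIdeal_comp_le hf π)).toLinearMap
    (Ideal.Quotient.factor_surjective (coordIdeal_comp_le hf π))

theorem le_gdGerm {f : Cn n → Cn (n + 1)} {c : Cardinal}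
    (hc : ∀ π : Cn (n + 1) →ₗ[ℂ] Cn n, Function.Surjective π → c ≤ multGerm fun x => π (f x)) :
    c ≤ gdGerm f := by
  let e (k : ℕ) : Cn k ≃ₗ[ℂ] (Fin k → ℂ) := WithLp.linearEquiv 2 ℂ (Fin k → ℂ)
  have hsurj : Function.Surjective
      ((e n).symm.toLinearMap ∘ₗ LinearMap.funLeft ℂ ℂ Fin.castSucc ∘ₗ (e (n + 1)).toLinearMap) :=
    (e n).symm.surjective.comp ((LinearMap.funLeft_surjective_of_injective ℂ ℂ _
      (Fin.castSucc_injective n)).comp (e (n + 1)).surjective)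
  refine le_csInf ⟨_, _, hsurj, rfl⟩ ?_
  rintro _ ⟨π, hπ, rfl⟩
  exact hc π hπ

theorem exists_forall_pow_mem_of_isUnit {k A : Type*} [Field k] [CommRing A] [Algebra k A]
    {I : Ideal A} (hI : Module.rank k (A ⧸ I) < Cardinal.aleph0) :
    ∃ N : ℕ, ∀ x : A, (∀ y, IsUnit (x * y + 1)) → x ^ N ∈ I := by
  have : Module.Finite k (A ⧸ I) := Module.rank_lt_aleph0_iff.1 hI
  have : IsArtinianRing (A ⧸ I) := .of_finite k _
  obtain ⟨N, hN⟩ := IsArtinianRing.isNilpotent_jacobson_bot (R := A ⧸ I)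
  refine ⟨N, fun x hx => ?_⟩
  have hjac : Ideal.Quotient.mk I x ∈ (⊥ : Ideal (A ⧸ I)).jacobson := by
    rw [Ideal.mem_jacobson_bot, Ideal.Quotient.mk_surjective.forall]
    exact fun y => by simpa only [map_add, map_mul, map_one] using (hx y).map (Ideal.Quotient.mk I)
  rw [← Ideal.Quotient.eq_zero_iff_mem, map_pow]
  simpa only [hN, Ideal.zero_eq_bot, Ideal.mem_bot] using Ideal.pow_mem_pow hjac N

theorem exists_forall_sub_sum_smul_mem {k A : Type*} [Field k] [CommRing A] [Algebra k A]
    {I : Ideal A} (hI : Module.rank k (A ⧸ I) < Cardinal.aleph0) :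
    ∃ (m : ℕ) (b : Fin m → A), Module.rank k (A ⧸ I) = m ∧
      ∀ x, ∃ c : Fin m → k, x - ∑ j, c j • b j ∈ I := by
  have : Module.Finite k (A ⧸ I) := Module.rank_lt_aleph0_iff.1 hI
  let B := Module.finBasis k (A ⧸ I)
  choose b hb using fun j => Ideal.Quotient.mkₐ_surjective k I (B j)
  refine ⟨_, b, (Module.finrank_eq_rank _ _).symm, fun x => ⟨B.repr (Ideal.Quotient.mkₐ k I x), ?_⟩⟩
  rw [← Ideal.Quotient.eq_zero_iff_mem, ← Ideal.Quotient.mkₐ_eq_mk k, map_sub, map_sum]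
  simp only [map_smul, hb, B.sum_repr, sub_self]

theorem exists_forall_toGerm_pow_mem_coordIdeal {f : Cn n → Cn p} (hfin : FiniteGerm f) :
    ∃ N : ℕ, ∀ g : analyticFunctions n, g.1 0 = 0 → toGerm g ^ N ∈ coordIdeal f := by
  obtain ⟨N, hN⟩ := exists_forall_pow_mem_of_isUnit hfin
  refine ⟨N, fun g hg => hN _ (toGerm_surjective.forall.2 fun h => ?_)⟩
  rw [← map_mul, ← map_one toGerm, ← map_add]
  exact isUnit_toGerm (by simp [hg])

theorem exists_forall_eventually_eq_sum {f : Cn n → Cn p} (hf : AnalyticAt ℂ f 0)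
    (hfin : FiniteGerm f) :
    ∃ (m : ℕ) (b : Fin m → Cn n → ℂ), multGerm f = m ∧
      ∀ u ∈ analyticFunctions n, ∃ (c : Fin m → ℂ) (a : Fin p → analyticFunctions n),
        ∀ᶠ x in 𝓝 0, u x = ∑ j, c j * b j x + ∑ i, (a i).1 x * f x i := by
  obtain ⟨m, b', hm, hb'⟩ := exists_forall_sub_sum_smul_mem hfin
  choose b hb using fun j => toGerm_surjective (b' j)
  refine ⟨m, fun j => (b j).1, hm, fun u hu => ?_⟩
  obtain ⟨c, hc⟩ := hb' (toGerm ⟨u, hu⟩)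
  simp only [← hb, ← map_smul, ← map_sum, ← map_sub] at hc
  obtain ⟨a, ha⟩ := (toGerm_mem_coordIdeal_iff hf).1 hc
  refine ⟨c, a, ha.mono fun x hx => ?_⟩
  rw [← hx]
  simp

end Germ

/-! ### The degree of a finite germ -/

section Degree

variable {n p : ℕ}

theorem tendsto_toLp_zero : Tendsto (fun x : Fin n → ℂ => (WithLp.toLp 2 x : Cn n)) (𝓝 0) (𝓝 0) :=
  (PiLp.continuousLinearEquiv 2 ℂ fun _ : Fin n => ℂ).symm.continuous.tendsto' 0 0 (map_zero _)

theorem eventually_forall_polydisc {P : Cn n → Prop} (h : ∀ᶠ x in 𝓝 0, P x) :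
    ∀ᶠ r in 𝓝[>] (0 : ℝ), ∀ x ∈ Metric.ball (0 : Fin n → ℂ) r, P (WithLp.toLp 2 x) := by
  obtain ⟨ε, hε, hP⟩ := Metric.eventually_nhds_iff_ball.1 (tendsto_toLp_zero.eventually h)
  filter_upwards [Ioo_mem_nhdsGT hε] with r hr x hx
  exact hP x (Metric.ball_subset_ball hr.2.le hx)

theorem eventually_mem_boundedSepHolo {g : Cn n → ℂ} (hg : AnalyticAt ℂ g 0) :
    ∀ᶠ r in 𝓝[>] (0 : ℝ), (fun x => g (WithLp.toLp 2 x)) ∈ boundedSepHolo (Fin n) r := by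
  have hbdd : ∀ᶠ x in 𝓝 (0 : Cn n), ‖g x‖ < ‖g 0‖ + 1 :=
    hg.continuousAt.norm.eventually_lt_const (lt_add_one _)
  filter_upwards [eventually_forall_polydisc hbdd,
    eventually_forall_polydisc hg.eventually_analyticAt] with r hr hgr
  refine ⟨‖g 0‖ + 1, fun x hx => (hr x hx).le, fun x hx i t ht => ?_⟩
  have hline : DifferentiableAt ℂ (fun t => (WithLp.toLp 2 (Function.update x i t) : Cn n)) t :=
    (PiLp.continuousLinearEquiv 2 ℂ fun _ : Fin n => ℂ).symm.differentiableAt.comp t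
      (hasFDerivAt_update x t).differentiableAt
  exact ((hgr _ (update_mem_polydisc hx i ht)).differentiableAt.comp t
    hline).differentiableWithinAt

theorem eventually_exists_boundedDecomp {m : ℕ} {f : Cn n → Cn p} {b : Fin m → Cn n → ℂ}
    {u : Cn n → ℂ} {c : Fin m → ℂ} {a : Fin p → analyticFunctions n}
    (h : ∀ᶠ x in 𝓝 0, u x = ∑ j, c j * b j x + ∑ i, (a i).1 x * f x i) :
    ∀ᶠ r in 𝓝[>] (0 : ℝ), ∃ K, BoundedDecomp (fun i x => f (WithLp.toLp 2 x) i)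
      (fun j x => b j (WithLp.toLp 2 x)) r K fun x => u (WithLp.toLp 2 x) := by
  filter_upwards [eventually_forall_polydisc h,
    eventually_all.2 fun i => eventually_mem_boundedSepHolo (a i).2] with r hu ha
  choose K hK using ha
  obtain ⟨M, hM⟩ := Finite.exists_le K
  exact ⟨M, c, fun i x => (a i).1 (WithLp.toLp 2 x), fun i => (hK i).mono (hM i), hu⟩

theorem exists_radius_forall_boundedDecomp {m : ℕ} {f : Cn n → Cn p} {b : Fin m → Cn n → ℂ}
    (hf : AnalyticAt ℂ f 0) (hfin : FiniteGerm f)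
    (hb : ∀ u ∈ analyticFunctions n, ∃ (c : Fin m → ℂ) (a : Fin p → analyticFunctions n),
      ∀ᶠ x in 𝓝 0, u x = ∑ j, c j * b j x + ∑ i, (a i).1 x * f x i) :
    ∃ r > 0, ∃ C, ∀ K g, BoundedSepHolo r K g → BoundedDecomp (fun i x => f (WithLp.toLp 2 x) i)
      (fun j x => b j (WithLp.toLp 2 x)) r (C * K) g := by
  obtain ⟨N, hN⟩ := exists_forall_toGerm_pow_mem_coordIdeal hfin
  have hX (k : Fin n) : (fun x : Cn n => x k) ∈ analyticFunctions n :=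
    apply_mem_analyticFunctions (f := id) analyticAt_id k
  have hpow : ∀ᶠ r in 𝓝[>] (0 : ℝ), ∀ k : Fin n, ∃ e : Fin p → (Fin n → ℂ) → ℂ,
      (∀ i, e i ∈ boundedSepHolo (Fin n) r) ∧
        ∀ x ∈ Metric.ball 0 r, x k ^ N = ∑ i, e i x * f (WithLp.toLp 2 x) i := by
    refine eventually_all.2 fun k => ?_
    obtain ⟨e, he⟩ := (toGerm_mem_coordIdeal_iff hf (g := ⟨_, hX k⟩ ^ N)).1 (hN ⟨_, hX k⟩ rfl)
    filter_upwards [eventually_forall_polydisc he,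
      eventually_all.2 fun i => eventually_mem_boundedSepHolo (e i).2] with r hr her
    exact ⟨_, her, hr⟩
  have hmon : ∀ᶠ r in 𝓝[>] (0 : ℝ), ∀ α ∈ {α : Fin n → ℕ | ∀ i, α i < N}, ∃ K,
      BoundedDecomp (fun i x => f (WithLp.toLp 2 x) i) (fun j x => b j (WithLp.toLp 2 x)) r K
        fun x => ∏ i, x i ^ α i := by
    have hfinite : {α : Fin n → ℕ | ∀ i, α i < N}.Finite :=
      (Set.finite_Iic fun _ => N).subset fun α hα i => (hα i).le
    refine (eventually_all_finite hfinite).2 fun α _ => ?_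
    obtain ⟨c, a, hca⟩ := hb (fun x => ∏ i, x i ^ α i)
      (Finset.univ.analyticAt_fun_prod fun i _ => AnalyticAt.pow (hX i) (α i))
    exact eventually_exists_boundedDecomp hca
  obtain ⟨r, hr, hpow, hmon⟩ :=
    ((eventually_mem_nhdsWithin (s := Ioi (0 : ℝ))).and (hpow.and hmon)).exists
  exact ⟨r, hr, exists_forall_boundedDecomp hr hpow hmon⟩

theorem exists_nhds_mk_fibre_le {f : Cn n → Cn p} (hf0 : f 0 = 0) (hf : AnalyticAt ℂ f 0)
    (hfin : FiniteGerm f) :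
    ∃ V ∈ 𝓝 (0 : Cn n), ∀ y, Cardinal.mk {x ∈ V | f x = y} ≤ multGerm f := by
  obtain ⟨m, b, hm, hb⟩ := exists_forall_eventually_eq_sum hf hfin
  obtain ⟨r, hr, C, hdiv⟩ := exists_radius_forall_boundedDecomp hf hfin hb
  have hball : ∀ᶠ x : Cn n in 𝓝 0, x.ofLp ∈ Metric.ball 0 r :=
    (PiLp.continuous_ofLp 2 _).continuousAt.preimage_mem_nhds (Metric.ball_mem_nhds _ hr)
  have hsmall : ∀ᶠ x : Cn n in 𝓝 0, (∑ i, ‖f x i‖) * C < 1 / 2 := by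
    have hcont : ContinuousAt (fun x => (∑ i, ‖f x i‖) * C) 0 :=
      (tendsto_finsetSum _ fun i _ =>
        (AnalyticAt.continuousAt (apply_mem_analyticFunctions hf i)).norm).mul_const _
    exact hcont.eventually_lt_const (by simp [hf0])
  refine ⟨_, hball.and hsmall, fun y => ?_⟩
  obtain hempty | ⟨z, ⟨-, hz⟩, rfl⟩ := Set.eq_empty_or_nonempty
    {x ∈ {x : Cn n | x.ofLp ∈ Metric.ball 0 r ∧ (∑ i, ‖f x i‖) * C < 1 / 2} | f x = y}
  · rw [hempty, Cardinal.mk_eq_zero]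
    exact zero_le
  · have hcard := mk_fibre_le_of_forall_boundedDecomp hdiv hz.le
    rw [Fintype.card_fin, ← hm] at hcard
    refine le_trans ?_ ((Cardinal.mk_preimage_of_injective _ _ (WithLp.ofLp_injective 2)).trans
      hcard)
    exact Cardinal.mk_le_mk_of_subset fun x hx => ⟨hx.1.1, fun i => congrArg (· i) hx.2⟩

theorem exists_hasDeg_le_multGerm {f : Cn n → Cn p} (hf0 : f 0 = 0) (hf : AnalyticAt ℂ f 0)
    (hfin : FiniteGerm f) : ∃ d : ℕ, HasDeg f d ∧ (d : Cardinal) ≤ multGerm f := by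
  obtain ⟨V, hV, hle⟩ := exists_nhds_mk_fibre_le hf0 hf hfin
  have hfib (y) : {x ∈ V | f x = y}.Finite :=
    Cardinal.lt_aleph0_iff_set_finite.1 ((hle y).trans_lt hfin)
  obtain ⟨U, B, hrep, h0, hUV⟩ := exists_properRep hf hV hfib
  obtain ⟨d, W, hW, hdense, hcard⟩ := hrep.exists_generic_fibreCard ⟨0, h0⟩
  obtain ⟨y, hy⟩ : (f '' U ∩ W).Nonempty :=
    closure_nonempty_iff.1 ⟨f 0, hdense (mem_image_of_mem f h0)⟩
  have hUVy : {x ∈ U | f x = y} ⊆ {x ∈ V | f x = y} := fun x hx => ⟨hUV hx.1, hx.2⟩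
  refine ⟨d, ⟨U, hrep.isOpen, h0, W, hW, hdense, hcard⟩, ?_⟩
  rw [← hcard y hy, fibreCard, Set.cast_ncard ((hfib y).subset hUVy)]
  exact (Cardinal.mk_le_mk_of_subset hUVy).trans (hle y)

end Degree

theorem deg_le_mult_le_gd_general {n p : ℕ} {f : Cn n → Cn p} (hf0 : f 0 = 0)
    (hfa : AnalyticAt ℂ f 0) (hfin : FiniteGerm f) :
    (∃ d : ℕ, HasDeg f d ∧ (d : Cardinal) ≤ multGerm f) ∧
      ∀ {q : ℕ} (π : Cn p →ₗ[ℂ] Cn q), multGerm f ≤ multGerm fun x => π (f x) :=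
  ⟨exists_hasDeg_le_multGerm hf0 hfa hfin, multGerm_le_multGerm_comp hfa⟩

/-- For a finite holomorphic map germ `f : (ℂⁿ,0) → (ℂⁿ⁺¹,0)` with
irreducible image, `deg f ≤ mult f ≤ gd f`. -/
theorem deg_le_mult_le_gd (n : ℕ) (f : Cn n → Cn (n+1))
    (hf0 : f 0 = 0) (hfa : AnalyticAt ℂ f 0) (hfin : FiniteGerm f)
    (hirr : ImageIrreducible f) :
    (∃ d : ℕ, HasDeg f d ∧ (d : Cardinal) ≤ multGerm f) ∧ multGerm f ≤ gdGerm f :=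
  (deg_le_mult_le_gd_general hf0 hfa hfin).imp_right fun h => le_gdGerm fun π _ => h π
end
end
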